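/- arXiv:2101.06226 — 7 statements merged into one kernel-verified Lean document; each statement's English description precedes it below -/
import Mathlib

section
/- Let x and n be integers greater than 1. Then x^n − 1 has a large primitive prime divisor, except exactly in the following cases: (1) n = 2 and x = 2^s·3^t − 1 for some natural numbers s ≥ 0 and t ∈ {0,1} with s ≥ 2 if t = 0; (2) x = 2 and n ∈ {4, 6, 10, 12, 18}; (3) x = 3 and n ∈ {4, 6}; (4) x = 5 and n = 6. -/
/-- For integers `x, n ≥ 2`, a prime `r` is a primitive prime divisor of `x^n - 1` if
`r ∣ x^n - 1` and `r` does not divide `x^i - 1` for any `1 ≤ i < n`. -/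
def IsPrimitivePrimeDivisor (x n r : ℕ) : Prop :=
  r.Prime ∧ r ∣ x ^ n - 1 ∧ ∀ i, 1 ≤ i → i < n → ¬ r ∣ x ^ i - 1

/-- `r` is a large primitive prime divisor of `x^n - 1` if it is a primitive prime divisor
and moreover `r > n + 1` or `r^2 ∣ x^n - 1`. -/
def IsLargePrimitivePrimeDivisor (x n r : ℕ) : Prop :=
  IsPrimitivePrimeDivisor x n r ∧ (n + 1 < r ∨ r ^ 2 ∣ x ^ n - 1)

/-!
Let `n ≥ 3`. A prime dividing `Φₙ(x)` is either a primitive prime divisor of `x ^ n - 1` or the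
largest prime factor `P` of `n`, and in the latter case `P ^ 2 ∤ Φₙ(x)`. A primitive prime divisor
that is not large equals `n + 1` and divides `x ^ n - 1` only once. So if there is no large
primitive prime divisor, then `Φₙ(x)` divides `P * (n + 1)`, and even `P` when `n + 1` is composite.
Comparing this with `Φₙ(x) ≥ x ^ φ(n) * (1 - 1 / x - 1 / x ^ 2)` and `2 * n ^ 2 ≤ 9 * φ(n) ^ 3`
leaves finitely many pairs `(x, n)`. For `n = 2` the primitive prime divisors are the odd prime
divisors of `x + 1`.
-/

open Polynomial ArithmeticFunction.Moebius

section Totient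

theorem sq_prime_pow_mul_le_totient_cube {p : ℕ} (hp : p.Prime) {k : ℕ} (hk : k ≠ 0) :
    (p ^ k) ^ 2 * (p - 1) ^ 3 ≤ p ^ 2 * (p ^ k).totient ^ 3 := by
  obtain ⟨j, rfl⟩ := Nat.exists_eq_succ_of_ne_zero hk
  calc (p ^ (j + 1)) ^ 2 * (p - 1) ^ 3 = p ^ 2 * (p ^ (2 * j) * (p - 1) ^ 3) := by ring
    _ ≤ p ^ 2 * (p ^ (3 * j) * (p - 1) ^ 3) := by
      gcongr
      · exact hp.one_le
      · norm_num
    _ = p ^ 2 * (p ^ (j + 1)).totient ^ 3 := by rw [Nat.totient_prime_pow_succ hp]; ring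

theorem sq_two_pow_le_totient_cube (k : ℕ) : (2 ^ k) ^ 2 ≤ 4 * (2 ^ k).totient ^ 3 := by
  rcases eq_or_ne k 0 with rfl | hk
  · simp
  · simpa using sq_prime_pow_mul_le_totient_cube Nat.prime_two hk

theorem sq_three_pow_le_totient_cube (k : ℕ) : 8 * (3 ^ k) ^ 2 ≤ 9 * (3 ^ k).totient ^ 3 := by
  rcases eq_or_ne k 0 with rfl | hk
  · simp
  · simpa [mul_comm] using sq_prime_pow_mul_le_totient_cube Nat.prime_three hk

theorem sq_le_totient_cube_of_not_dvd {n : ℕ} (h2 : ¬ 2 ∣ n) (h3 : ¬ 3 ∣ n) :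
    n ^ 2 ≤ n.totient ^ 3 := by
  induction n using Nat.recOnPosPrimePosCoprime with
  | zero => simp
  | one => simp
  | prime_pow p k hp hk =>
    have hp5 : 5 ≤ p := by
      have hp2 : p ≠ 2 := by rintro rfl; exact h2 (dvd_pow_self 2 hk.ne')
      have hp3 : p ≠ 3 := by rintro rfl; exact h3 (dvd_pow_self 3 hk.ne')
      exact hp.five_le_of_ne_two_of_ne_three hp2 hp3
    have hsq : p ^ 2 ≤ (p - 1) ^ 3 := by
      obtain ⟨q, rfl⟩ : ∃ q, p = q + 1 := ⟨p - 1, by lia⟩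
      rw [Nat.add_sub_cancel]
      nlinarith [Nat.mul_le_mul_right q (show 4 ≤ q by lia)]
    refine Nat.le_of_mul_le_mul_left ?_ (pow_pos hp.pos 2)
    calc p ^ 2 * (p ^ k) ^ 2 ≤ (p - 1) ^ 3 * (p ^ k) ^ 2 := by gcongr
      _ = (p ^ k) ^ 2 * (p - 1) ^ 3 := mul_comm _ _
      _ ≤ p ^ 2 * (p ^ k).totient ^ 3 := sq_prime_pow_mul_le_totient_cube hp hk.ne'
  | coprime a b _ _ hab iha ihb =>
    rw [Nat.totient_mul hab, mul_pow, mul_pow]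
    exact Nat.mul_le_mul (iha (fun h ↦ h2 (h.mul_right b)) (fun h ↦ h3 (h.mul_right b)))
      (ihb (fun h ↦ h2 (h.mul_left a)) (fun h ↦ h3 (h.mul_left a)))

theorem two_mul_sq_le_nine_mul_totient_cube (n : ℕ) : 2 * n ^ 2 ≤ 9 * n.totient ^ 3 := by
  rcases eq_or_ne n 0 with rfl | hn
  · simp
  obtain ⟨a, m, hm, rfl⟩ := Nat.exists_eq_pow_mul_and_not_dvd hn 2 (by norm_num)
  obtain ⟨b, l, hl, rfl⟩ :=
    Nat.exists_eq_pow_mul_and_not_dvd (right_ne_zero_of_mul hn) 3 (by norm_num)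
  have hcop₂ : (2 ^ a).Coprime (3 ^ b * l) :=
    ((Nat.prime_two.coprime_iff_not_dvd).2 hm).pow_left a
  have hcop₃ : (3 ^ b).Coprime l := ((Nat.prime_three.coprime_iff_not_dvd).2 hl).pow_left b
  have hl₂ : ¬ 2 ∣ l := fun h ↦ hm (h.mul_left _)
  refine Nat.le_of_mul_le_mul_left ?_ (show 0 < 4 by norm_num)
  calc 4 * (2 * (2 ^ a * (3 ^ b * l)) ^ 2) = (2 ^ a) ^ 2 * (8 * (3 ^ b) ^ 2 * l ^ 2) := by ring
    _ ≤ 4 * (2 ^ a).totient ^ 3 * (9 * (3 ^ b).totient ^ 3 * l.totient ^ 3) :=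
      Nat.mul_le_mul (sq_two_pow_le_totient_cube a)
        (Nat.mul_le_mul (sq_three_pow_le_totient_cube b) (sq_le_totient_cube_of_not_dvd hl₂ hl))
    _ = 4 * (9 * (2 ^ a * (3 ^ b * l)).totient ^ 3) := by
      rw [Nat.totient_mul hcop₂, Nat.totient_mul hcop₃]; ring

theorem twelve_mul_cube_lt_two_pow {k : ℕ} (hk : 16 ≤ k) : 12 * k ^ 3 < 2 ^ k := by
  induction k, hk using Nat.le_induction with
  | base => norm_num
  | succ k hk ih =>
    have hcube : (k + 1) ^ 3 ≤ 2 * k ^ 3 := by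
      nlinarith [Nat.mul_le_mul_right (k ^ 2) hk, Nat.mul_le_mul_right k hk]
    rw [pow_succ 2]
    lia

theorem lt_of_two_pow_totient_le {n : ℕ} (h : 2 * 2 ^ (n.totient - 2) ≤ n * (n + 1)) :
    n < 124 := by
  by_contra! hn
  have hcube := two_mul_sq_le_nine_mul_totient_cube n
  have htot : 16 ≤ n.totient := by
    by_contra! hlt
    have : n.totient ^ 3 ≤ 15 ^ 3 := Nat.pow_le_pow_left (by lia) 3
    nlinarith
  have hpow : 2 ^ n.totient = 4 * 2 ^ (n.totient - 2) := by
    rw [← pow_mul_pow_sub 2 (show 2 ≤ n.totient by lia)]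
    norm_num
  have := twelve_mul_cube_lt_two_pow htot
  nlinarith

theorem mem_of_two_pow_totient_le {n : ℕ} (hn : 3 ≤ n)
    (h : 2 * 2 ^ (n.totient - 2) ≤ n * (n + 1)) :
    n ∈ ({3, 4, 5, 6, 7, 8, 9, 10, 12, 14, 15, 16, 18, 20, 24, 30} : Finset ℕ) := by
  have hlt := lt_of_two_pow_totient_le h
  revert hn h
  revert n
  decide +kernel

end Totient

section LowerBound

theorem one_sub_sub_sq_add_pow_le_prod {R : Type*} [CommRing R] [LinearOrder R]
    [IsStrictOrderedRing R] {q : R} (hq₀ : 0 ≤ q) (hq₁ : q ≤ 1) {N : ℕ} (hN : 1 ≤ N) :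
    1 - q - q ^ 2 + q ^ (N + 1) ≤ ∏ e ∈ Finset.Icc 1 N, (1 - q ^ e) := by
  induction N, hN using Nat.le_induction with
  | base => simp
  | succ N hN ih =>
    have hu₀ : 0 ≤ q ^ (N + 1) := pow_nonneg hq₀ _
    have hu₁ : q ^ (N + 1) ≤ 1 := pow_le_one₀ hq₀ hq₁
    have hu₂ : q ^ (N + 1) ≤ q ^ 2 := pow_le_pow_of_le_one hq₀ hq₁ (by lia)
    calc 1 - q - q ^ 2 + q ^ (N + 1 + 1)
        ≤ (1 - q - q ^ 2 + q ^ (N + 1)) * (1 - q ^ (N + 1)) := by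
          rw [pow_succ q (N + 1)]
          nlinarith
      _ ≤ (∏ e ∈ Finset.Icc 1 N, (1 - q ^ e)) * (1 - q ^ (N + 1)) := by
          gcongr
      _ = ∏ e ∈ Finset.Icc 1 (N + 1), (1 - q ^ e) := (Finset.prod_Icc_succ_top (by lia) _).symm

variable {K : Type*} [Field K] [LinearOrder K] [IsStrictOrderedRing K] {x : K}

theorem cyclotomic_eval_eq_pow_totient_mul_prod (hx : 1 < x) {n : ℕ} (hn : n ≠ 0) :
    (cyclotomic n K).eval x =
      x ^ n.totient * ∏ e ∈ n.divisors, (1 - x⁻¹ ^ e) ^ μ (n / e) := by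
  have hx₀ : x ≠ 0 := (zero_lt_one.trans hx).ne'
  have hcyc (m : ℕ) (_ : 0 < m) : (cyclotomic m K).eval x / x ^ m.totient ≠ 0 :=
    div_ne_zero (cyclotomic_pos' m hx).ne' (pow_ne_zero _ hx₀)
  have hsub (m : ℕ) (hm : 0 < m) : 1 - x⁻¹ ^ m ≠ 0 :=
    (sub_pos.2 (pow_lt_one₀ (by positivity) (inv_lt_one_of_one_lt₀ hx) hm.ne')).ne'
  have hprod (m : ℕ) (hm : 0 < m) :
      ∏ d ∈ m.divisors, (cyclotomic d K).eval x / x ^ d.totient = 1 - x⁻¹ ^ m := by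
    rw [Finset.prod_div_distrib, Finset.prod_pow_eq_pow_sum, Nat.sum_totient, ← eval_prod,
      prod_cyclotomic_eq_X_pow_sub_one hm]
    simp only [eval_sub, eval_pow, eval_X, eval_one]
    rw [sub_div, div_self (pow_ne_zero m hx₀), inv_pow, one_div]
  have hinv :=
    (ArithmeticFunction.prod_eq_iff_prod_pow_moebius_eq_of_nonzero hcyc hsub).1 hprod n
      (Nat.pos_of_ne_zero hn)
  rw [Nat.prod_divisorsAntidiagonal' (f := fun a b ↦ (1 - x⁻¹ ^ b) ^ μ a)] at hinv
  rw [hinv, mul_div_cancel₀ _ (pow_ne_zero _ hx₀)]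

theorem pow_totient_mul_le_cyclotomic_eval (hx : 1 < x) {n : ℕ} (hn : n ≠ 0) :
    x ^ n.totient * (1 - x⁻¹ - x⁻¹ ^ 2) ≤ (cyclotomic n K).eval x := by
  have hx₀ : 0 < x := zero_lt_one.trans hx
  have hq₀ : 0 < x⁻¹ := inv_pos.2 hx₀
  have hq₁ : x⁻¹ < 1 := inv_lt_one_of_one_lt₀ hx
  have hfactor₀ {e : ℕ} (he : 0 < e) : 0 < 1 - x⁻¹ ^ e :=
    sub_pos.2 (pow_lt_one₀ hq₀.le hq₁ he.ne')
  have hfactor₁ (e : ℕ) : 1 - x⁻¹ ^ e ≤ 1 := sub_le_self _ (pow_pos hq₀ e).le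
  rw [cyclotomic_eval_eq_pow_totient_mul_prod hx hn]
  gcongr
  calc 1 - x⁻¹ - x⁻¹ ^ 2 ≤ 1 - x⁻¹ - x⁻¹ ^ 2 + x⁻¹ ^ (n + 1) :=
        le_add_of_nonneg_right (pow_pos hq₀ _).le
    _ ≤ ∏ e ∈ Finset.Icc 1 n, (1 - x⁻¹ ^ e) :=
        one_sub_sub_sq_add_pow_le_prod hq₀.le hq₁.le (Nat.one_le_iff_ne_zero.2 hn)
    _ ≤ ∏ e ∈ n.divisors, (1 - x⁻¹ ^ e) :=
        Finset.prod_le_prod_of_subset_of_le_one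
          (fun e he ↦ Finset.mem_Icc.2 ⟨Nat.pos_of_mem_divisors he, Nat.divisor_le he⟩)
          (fun e he ↦ (hfactor₀ (Finset.mem_Icc.1 he).1).le) (fun e _ _ ↦ hfactor₁ e)
    _ ≤ ∏ e ∈ n.divisors, (1 - x⁻¹ ^ e) ^ μ (n / e) := by
        refine Finset.prod_le_prod
          (fun e he ↦ (hfactor₀ (Nat.pos_of_mem_divisors he)).le) fun e he ↦ ?_
        have hμ : μ (n / e) ≤ 1 := (abs_le.1 ArithmeticFunction.abs_moebius_le_one).2
        simpa using zpow_le_zpow_right_of_le_one₀ (hfactor₀ (Nat.pos_of_mem_divisors he))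
          (hfactor₁ e) hμ

end LowerBound

section Primitive

variable {x n r : ℕ}

theorem dvd_pow_sub_one_iff_natCast_pow_eq_one (hx : x ≠ 0) (r i : ℕ) :
    r ∣ x ^ i - 1 ↔ (x : ZMod r) ^ i = 1 := by
  rw [← ZMod.natCast_eq_zero_iff, Nat.cast_sub (Nat.one_le_pow _ _ (Nat.pos_of_ne_zero hx)),
    sub_eq_zero, Nat.cast_pow, Nat.cast_one]

theorem isPrimitivePrimeDivisor_iff_isPrimitiveRoot (hx : x ≠ 0) (hn : n ≠ 0) :
    IsPrimitivePrimeDivisor x n r ↔ r.Prime ∧ IsPrimitiveRoot (x : ZMod r) n := by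
  simp only [IsPrimitivePrimeDivisor, dvd_pow_sub_one_iff_natCast_pow_eq_one hx]
  refine and_congr_right fun _ ↦ ⟨fun h ↦ ?_, fun h ↦ ⟨h.pow_eq_one, fun i hi hin ↦ ?_⟩⟩
  · exact IsPrimitiveRoot.mk_of_lt _ (Nat.pos_of_ne_zero hn) h.1 h.2
  · exact h.pow_ne_one_of_pos_of_lt (Nat.one_le_iff_ne_zero.1 hi) hin

theorem lt_of_isPrimitiveRoot_zmod (hr : r.Prime) {m : ℕ} (hm : m ≠ 0) {a : ZMod r}
    (h : IsPrimitiveRoot a m) : m < r := by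
  have := Fact.mk hr
  have hdvd : m ∣ r - 1 :=
    h.dvd_of_pow_eq_one _ (ZMod.pow_card_sub_one_eq_one (h.ne_zero hm))
  have := Nat.le_of_dvd (Nat.sub_pos_of_lt hr.one_lt) hdvd
  have := hr.pos
  lia

theorem IsPrimitivePrimeDivisor.eq_succ (hx : x ≠ 0) (hn : n ≠ 0)
    (hr : IsPrimitivePrimeDivisor x n r) (hlarge : ¬ IsLargePrimitivePrimeDivisor x n r) :
    r = n + 1 := by
  have hlt : n < r :=
    lt_of_isPrimitiveRoot_zmod hr.1 hn ((isPrimitivePrimeDivisor_iff_isPrimitiveRoot hx hn).1 hr).2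
  have hle : ¬ n + 1 < r := fun h ↦ hlarge ⟨hr, .inl h⟩
  lia

end Primitive

section CyclotomicValue

/-- The natural number `|Φₙ(x)|`, where `Φₙ` is the `n`-th cyclotomic polynomial. It carries all
primitive prime divisors of `x ^ n - 1`. The absolute value is harmless, as `Φₙ(x) > 0` for
`x > 1`. -/
noncomputable def cyclotomicValue (n x : ℕ) : ℕ :=
  ((cyclotomic n ℤ).eval (x : ℤ)).natAbs

variable {n x r : ℕ}

theorem natCast_cyclotomicValue {R : Type*} [CommRing R] (hx : 1 < x) (n : ℕ) :
    (cyclotomicValue n x : R) = (cyclotomic n R).eval (x : R) := by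
  have hint : (cyclotomicValue n x : ℤ) = (cyclotomic n ℤ).eval (x : ℤ) :=
    Int.natAbs_of_nonneg (cyclotomic_pos' n (by exact_mod_cast hx)).le
  have hmap := eval_intCast_map (Int.castRingHom R) (cyclotomic n ℤ) (x : ℤ)
  simp only [map_cyclotomic_int, eq_intCast, Int.cast_natCast, ← hint] at hmap
  exact hmap.symm

theorem cyclotomicValue_dvd_pow_sub_one (hx : x ≠ 0) (n : ℕ) :
    cyclotomicValue n x ∣ x ^ n - 1 := by
  have h := eval_dvd (x := (x : ℤ)) (cyclotomic.dvd_X_pow_sub_one n ℤ)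
  rw [cyclotomicValue, ← Int.natCast_dvd_natCast, Int.natAbs_dvd,
    Nat.cast_sub (Nat.one_le_pow _ _ (Nat.pos_of_ne_zero hx))]
  simpa using h

theorem prime_dvd_cyclotomicValue_iff (hr : r.Prime) {m : ℕ} (hm : ¬ r ∣ m) (k x : ℕ) :
    r ∣ cyclotomicValue (r ^ k * m) x ↔ IsPrimitiveRoot (x : ZMod r) m := by
  have := Fact.mk hr
  have : NeZero (m : ZMod r) := ⟨by rwa [Ne, ZMod.natCast_eq_zero_iff]⟩
  have hmap := eval_intCast_map (Int.castRingHom (ZMod r)) (cyclotomic (r ^ k * m) ℤ) (x : ℤ)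
  simp only [map_cyclotomic_int, eq_intCast, Int.cast_natCast] at hmap
  rw [← isRoot_cyclotomic_prime_pow_mul_iff_of_charP (k := k) (p := r), IsRoot.def, hmap,
    ZMod.intCast_zmod_eq_zero_iff_dvd, cyclotomicValue, Int.natCast_dvd]

theorem exists_eq_prime_pow_mul_of_not_isPrimitivePrimeDivisor (hx : x ≠ 0) (hn : n ≠ 0)
    (hr : r.Prime) (hdvd : r ∣ cyclotomicValue n x) (hprim : ¬ IsPrimitivePrimeDivisor x n r) :
    ∃ k m, n = r ^ (k + 1) * m ∧ m < r ∧ IsPrimitiveRoot (x : ZMod r) m := by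
  obtain ⟨k, m, hm, rfl⟩ := Nat.exists_eq_pow_mul_and_not_dvd hn r hr.ne_one
  have hroot := (prime_dvd_cyclotomicValue_iff hr hm k x).1 hdvd
  have hk : k ≠ 0 := by
    rintro rfl
    rw [pow_zero, one_mul] at hprim hn
    exact hprim ((isPrimitivePrimeDivisor_iff_isPrimitiveRoot hx hn).2 ⟨hr, hroot⟩)
  obtain ⟨k, rfl⟩ := Nat.exists_eq_succ_of_ne_zero hk
  exact ⟨k, m, rfl, lt_of_isPrimitiveRoot_zmod hr (right_ne_zero_of_mul hn) hroot, hroot⟩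

theorem isGreatest_primeFactors_of_not_isPrimitivePrimeDivisor (hx : x ≠ 0) (hn : n ≠ 0)
    (hr : r.Prime) (hdvd : r ∣ cyclotomicValue n x) (hprim : ¬ IsPrimitivePrimeDivisor x n r) :
    IsGreatest (n.primeFactors : Set ℕ) r := by
  obtain ⟨k, m, rfl, hmr, -⟩ :=
    exists_eq_prime_pow_mul_of_not_isPrimitivePrimeDivisor hx hn hr hdvd hprim
  refine ⟨Nat.mem_primeFactors.2 ⟨hr, (dvd_pow_self r k.succ_ne_zero).mul_right m, hn⟩,
    fun q hq ↦ ?_⟩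
  have hq' := Nat.prime_of_mem_primeFactors hq
  rcases hq'.dvd_mul.1 (Nat.dvd_of_mem_primeFactors hq) with h | h
  · exact Nat.le_of_dvd hr.pos (hq'.dvd_of_dvd_pow h)
  · exact (Nat.le_of_dvd (Nat.pos_of_ne_zero (right_ne_zero_of_mul hn)) h).trans hmr.le

theorem cyclotomic_mul_dvd_geom_sum (R : Type*) [CommRing R] {d k : ℕ} (hd : d ≠ 0) (hk : 1 < k) :
    cyclotomic (d * k) R ∣ ∑ i ∈ Finset.range k, (X ^ d) ^ i := by
  have hproper : d ∈ (d * k).properDivisors :=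
    Nat.mem_properDivisors.2 ⟨dvd_mul_right d k, lt_mul_of_one_lt_right (Nat.pos_of_ne_zero hd) hk⟩
  obtain ⟨q, hq⟩ := X_pow_sub_one_mul_cyclotomic_dvd_X_pow_sub_one_of_dvd R hproper
  refine ⟨q, (monic_X_pow_sub_C (1 : R) hd).isRegular.left ?_⟩
  simp only [map_one]
  rw [mul_comm, geom_sum_mul, ← pow_mul, hq, mul_assoc]

-- For odd `r` this holds for every `y ≡ 1 [MOD r]`; for `r = 2` the sum is `1 + y`, and a square
-- `y` keeps it away from `0` modulo `4`.
theorem not_sq_dvd_geom_sum (hr : r.Prime) {y : ℤ} (hy : (r : ℤ) ∣ y - 1)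
    (hsq : r = 2 → IsSquare y) : ¬ (r : ℤ) ^ 2 ∣ ∑ i ∈ Finset.range r, y ^ i := by
  intro hdvd
  rcases hr.eq_two_or_odd' with rfl | hodd
  · obtain ⟨z, rfl⟩ := hsq rfl
    have hmod : ∀ a : ZMod 4, 1 + a * a ≠ 0 := by decide
    apply hmod z
    rw [Finset.sum_range_succ, Finset.sum_range_one, pow_zero, pow_one] at hdvd
    exact_mod_cast (ZMod.intCast_zmod_eq_zero_iff_dvd _ 4).2 hdvd
  · have hr' := Nat.prime_iff_prime_int.1 hr
    have hry : ¬ (r : ℤ) ∣ y := fun h ↦ hr'.not_dvd_one ((dvd_sub_right h).1 hy)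
    have hmult := emultiplicity_geom_sum₂_eq_one hr' hodd hy hry
    simp only [one_pow, mul_one] at hmult
    have hle := le_emultiplicity_of_pow_dvd hdvd
    rw [hmult] at hle
    exact absurd hle (by decide)

theorem not_sq_dvd_cyclotomicValue_of_not_isPrimitivePrimeDivisor (hx : x ≠ 0) (hn : 3 ≤ n)
    (hr : r.Prime) (hdvd : r ∣ cyclotomicValue n x) (hprim : ¬ IsPrimitivePrimeDivisor x n r) :
    ¬ r ^ 2 ∣ cyclotomicValue n x := by
  obtain ⟨k, m, rfl, hmr, hroot⟩ :=
    exists_eq_prime_pow_mul_of_not_isPrimitivePrimeDivisor hx (by lia) hr hdvd hprim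
  have hm : m ≠ 0 := right_ne_zero_of_mul (show r ^ (k + 1) * m ≠ 0 by lia)
  have hy : (r : ℤ) ∣ (x : ℤ) ^ (r ^ k * m) - 1 := by
    rw [← ZMod.intCast_zmod_eq_zero_iff_dvd]
    push_cast
    rw [mul_comm, pow_mul, hroot.pow_eq_one, one_pow, sub_self]
  have hsq : r = 2 → IsSquare ((x : ℤ) ^ (r ^ k * m)) := by
    rintro rfl
    obtain rfl : m = 1 := by lia
    have hk : k ≠ 0 := by rintro rfl; norm_num at hn
    exact (((even_two.pow_of_ne_zero hk).mul_right 1)).isSquare_pow _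
  refine fun h ↦ not_sq_dvd_geom_sum hr hy hsq ?_
  have hgeom := eval_dvd (x := (x : ℤ))
    (cyclotomic_mul_dvd_geom_sum ℤ (mul_ne_zero (pow_ne_zero k hr.ne_zero) hm) hr.one_lt)
  rw [show r ^ k * m * r = r ^ (k + 1) * m by ring] at hgeom
  simp only [eval_finsetSum, eval_pow, eval_X] at hgeom
  refine dvd_trans ?_ hgeom
  exact_mod_cast Int.natCast_dvd.2 h

theorem mul_pow_totient_sub_two_le_cyclotomicValue (hn : 3 ≤ n) (hx : 2 ≤ x) :
    (x * (x - 1) - 1) * x ^ (n.totient - 2) ≤ cyclotomicValue n x := by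
  have hreal := pow_totient_mul_le_cyclotomic_eval (K := ℝ) (x := x)
    (by exact_mod_cast hx) (show n ≠ 0 by lia)
  rw [← natCast_cyclotomicValue (by lia)] at hreal
  have htot : 2 ≤ n.totient :=
    Nat.le_of_dvd (Nat.totient_pos.2 (by lia)) (Nat.totient_even hn).two_dvd
  have hfactor : (((x * (x - 1) - 1 : ℕ) : ℝ)) = x ^ 2 * (1 - (x : ℝ)⁻¹ - (x : ℝ)⁻¹ ^ 2) := by
    have hx₀ : (x : ℝ) ≠ 0 := by positivity
    have hpos : 1 ≤ x * (x - 1) := Nat.mul_pos (by lia) (by lia)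
    push_cast [hpos, show 1 ≤ x by lia]
    field_simp
  have hcast : (((x * (x - 1) - 1) * x ^ (n.totient - 2) : ℕ) : ℝ) ≤ cyclotomicValue n x := by
    rw [Nat.cast_mul, hfactor, Nat.cast_pow, mul_right_comm, pow_mul_pow_sub _ htot]
    exact hreal
  exact_mod_cast hcast

theorem lt_of_cyclotomicValue_lt (hn : 3 ≤ n) (hx : 2 ≤ x) {c : ℕ}
    (h : cyclotomicValue n x < (c * (c - 1) - 1) * c ^ (n.totient - 2)) : x < c := by
  by_contra! hcx
  refine (h.trans_le ?_).not_ge (mul_pow_totient_sub_two_le_cyclotomicValue hn hx)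
  gcongr

end CyclotomicValue

section NoLargePrimitivePrimeDivisor

theorem dvd_of_squarefree_of_forall_prime_dvd {m k : ℕ} (hm : Squarefree m)
    (h : ∀ r, r.Prime → r ∣ m → r ∣ k) : m ∣ k := by
  rw [← Nat.prod_primeFactors_of_squarefree hm]
  exact Finset.prod_primes_dvd k (fun r hr ↦ (Nat.prime_of_mem_primeFactors hr).prime)
    fun r hr ↦ h r (Nat.prime_of_mem_primeFactors hr) (Nat.dvd_of_mem_primeFactors hr)

variable {x n P : ℕ}

theorem squarefree_cyclotomicValue (hx : x ≠ 0) (hn : 3 ≤ n)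
    (h : ¬ ∃ r, IsLargePrimitivePrimeDivisor x n r) : Squarefree (cyclotomicValue n x) := by
  refine Nat.squarefree_iff_prime_squarefree.2 fun r hr hsq ↦ ?_
  rw [← sq] at hsq
  have hdvd : r ∣ cyclotomicValue n x := (dvd_pow_self r two_ne_zero).trans hsq
  by_cases hprim : IsPrimitivePrimeDivisor x n r
  · exact h ⟨r, hprim, .inr (hsq.trans (cyclotomicValue_dvd_pow_sub_one hx n))⟩
  · exact not_sq_dvd_cyclotomicValue_of_not_isPrimitivePrimeDivisor hx hn hr hdvd hprim hsq

theorem eq_or_eq_succ_of_dvd_cyclotomicValue (hx : x ≠ 0) (hn : n ≠ 0)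
    (hP : IsGreatest (n.primeFactors : Set ℕ) P)
    (h : ¬ ∃ r, IsLargePrimitivePrimeDivisor x n r) {r : ℕ} (hr : r.Prime)
    (hdvd : r ∣ cyclotomicValue n x) : r = P ∨ r = n + 1 := by
  by_cases hprim : IsPrimitivePrimeDivisor x n r
  · exact .inr (hprim.eq_succ hx hn fun hlarge ↦ h ⟨r, hlarge⟩)
  · exact .inl
      ((isGreatest_primeFactors_of_not_isPrimitivePrimeDivisor hx hn hr hdvd hprim).unique hP)

theorem exists_isGreatest_primeFactors (hn : 2 ≤ n) :
    ∃ P, IsGreatest (n.primeFactors : Set ℕ) P :=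
  ⟨_, Finset.isGreatest_max' _ (Nat.nonempty_primeFactors.2 hn)⟩

theorem cyclotomicValue_le_of_not_prime_succ (hx : x ≠ 0) (hn : 3 ≤ n)
    (h : ¬ ∃ r, IsLargePrimitivePrimeDivisor x n r) (hsucc : ¬ (n + 1).Prime) :
    cyclotomicValue n x ≤ n := by
  obtain ⟨P, hP⟩ := exists_isGreatest_primeFactors (n := n) (by lia)
  have hPn : P ∣ n := Nat.dvd_of_mem_primeFactors hP.1
  have hdvd : cyclotomicValue n x ∣ P :=
    dvd_of_squarefree_of_forall_prime_dvd (squarefree_cyclotomicValue hx hn h) fun r hr hrdvd ↦ by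
      rcases eq_or_eq_succ_of_dvd_cyclotomicValue hx (by lia) hP h hr hrdvd with rfl | rfl
      · exact dvd_rfl
      · exact absurd hr hsucc
  exact Nat.le_of_dvd (by lia) (hdvd.trans hPn)

theorem two_mul_cyclotomicValue_le_of_prime_succ (hx : x ≠ 0) (hn : 3 ≤ n)
    (h : ¬ ∃ r, IsLargePrimitivePrimeDivisor x n r) (hsucc : (n + 1).Prime) :
    2 * cyclotomicValue n x ≤ n * (n + 1) := by
  obtain ⟨P, hP⟩ := exists_isGreatest_primeFactors (n := n) (by lia)
  obtain ⟨hPprime, ⟨k, rfl⟩, hn₀⟩ := Nat.mem_primeFactors.1 hP.1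
  have hdvd : cyclotomicValue (P * k) x ∣ P * (P * k + 1) :=
    dvd_of_squarefree_of_forall_prime_dvd (squarefree_cyclotomicValue hx hn h) fun r hr hrdvd ↦ by
      rcases eq_or_eq_succ_of_dvd_cyclotomicValue hx hn₀ hP h hr hrdvd with rfl | rfl
      · exact dvd_mul_right _ _
      · exact dvd_mul_left _ _
  have hk : 2 ≤ k := by
    have hk₁ : k ≠ 1 := by
      rintro rfl
      have hPodd : Odd P := hPprime.odd_of_ne_two (by lia)
      have hsuccOdd : Odd (P * 1 + 1) := hsucc.odd_of_ne_two (by lia)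
      grind
    have hk₀ : k ≠ 0 := right_ne_zero_of_mul hn₀
    lia
  calc 2 * cyclotomicValue (P * k) x ≤ 2 * (P * (P * k + 1)) := by
        gcongr
        exact Nat.le_of_dvd (Nat.mul_pos hPprime.pos (by lia)) hdvd
    _ ≤ k * (P * (P * k + 1)) := by gcongr
    _ = P * k * (P * k + 1) := by ring

theorem cyclotomicValue_le_ite (hx : x ≠ 0) (hn : 3 ≤ n)
    (h : ¬ ∃ r, IsLargePrimitivePrimeDivisor x n r) :
    cyclotomicValue n x ≤ if (n + 1).Prime then n * (n + 1) / 2 else n := by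
  split_ifs with hsucc
  · rw [Nat.le_div_iff_mul_le two_pos, mul_comm]
    exact two_mul_cyclotomicValue_le_of_prime_succ hx hn h hsucc
  · exact cyclotomicValue_le_of_not_prime_succ hx hn h hsucc

/-- The pairs `(x, n)` with `n ≥ 3` for which `x ^ n - 1` has no large primitive prime divisor. -/
def exceptionalPairs : Finset (ℕ × ℕ) :=
  {(2, 4), (2, 6), (2, 10), (2, 12), (2, 18), (3, 4), (3, 6), (5, 6)}

theorem mem_of_not_exists_isLargePrimitivePrimeDivisor (hx : 2 ≤ x) (hn : 3 ≤ n)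
    (h : ¬ ∃ r, IsLargePrimitivePrimeDivisor x n r) :
    (x, n) ∈ exceptionalPairs ∪
      {(2, 3), (2, 5), (2, 8), (2, 16), (2, 30), (3, 10), (3, 12), (4, 6)} := by
  have hlower := mul_pow_totient_sub_two_le_cyclotomicValue hn hx
  have hupper := cyclotomicValue_le_ite (by lia) hn h
  have hmem : n ∈ ({3, 4, 5, 6, 7, 8, 9, 10, 12, 14, 15, 16, 18, 20, 24, 30} : Finset ℕ) := by
    refine mem_of_two_pow_totient_le hn ?_
    have hpow : 2 ^ (n.totient - 2) ≤ (x * (x - 1) - 1) * x ^ (n.totient - 2) := by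
      have hfactor : 2 * (2 - 1) - 1 ≤ x * (x - 1) - 1 := by gcongr
      simpa using Nat.mul_le_mul hfactor (Nat.pow_le_pow_left hx (n.totient - 2))
    have hite : 2 * (if (n + 1).Prime then n * (n + 1) / 2 else n) ≤ n * (n + 1) := by
      split_ifs
      · exact Nat.mul_div_le _ _
      · nlinarith
    lia
  have hx₆ : x < 6 := by
    refine lt_of_cyclotomicValue_lt hn hx (hupper.trans_lt ?_)
    clear * - hmem
    revert n
    decide +kernel
  have hbound := hlower.trans hupper
  clear * - hx hmem hx₆ hbound
  revert n
  revert x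
  decide +kernel

end NoLargePrimitivePrimeDivisor

section SmallCases

variable {x n : ℕ}

theorem not_exists_isLargePrimitivePrimeDivisor_of_eq_prod {l : List ℕ} (hl : ∀ q ∈ l, q.Prime)
    (hprod : x ^ n - 1 = l.prod)
    (hsmall : ∀ q ∈ l, (∃ i < n, 1 ≤ i ∧ q ∣ x ^ i - 1) ∨ q ≤ n + 1 ∧ ¬ q ^ 2 ∣ x ^ n - 1) :
    ¬ ∃ r, IsLargePrimitivePrimeDivisor x n r := by
  rintro ⟨r, ⟨hr, hdvd, hprim⟩, hlarge⟩
  have hmem : r ∈ l := by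
    obtain ⟨q, hq, hrq⟩ := hr.prime.dvd_prod_iff.1 (hprod ▸ hdvd)
    rwa [(Nat.prime_dvd_prime_iff_eq hr (hl q hq)).1 hrq]
  rcases hsmall r hmem with ⟨i, hin, hi, hri⟩ | ⟨hle, hsq⟩
  · exact hprim i hi hin hri
  · exact hlarge.elim hle.not_gt hsq

theorem not_exists_isLargePrimitivePrimeDivisor_of_mem (h : (x, n) ∈ exceptionalPairs) :
    ¬ ∃ r, IsLargePrimitivePrimeDivisor x n r := by
  simp only [exceptionalPairs, Finset.mem_insert, Finset.mem_singleton, Prod.mk.injEq] at h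
  rcases h with ⟨rfl, rfl⟩ | ⟨rfl, rfl⟩ | ⟨rfl, rfl⟩ | ⟨rfl, rfl⟩ | ⟨rfl, rfl⟩ | ⟨rfl, rfl⟩ |
    ⟨rfl, rfl⟩ | ⟨rfl, rfl⟩
  · exact not_exists_isLargePrimitivePrimeDivisor_of_eq_prod (l := [3, 5])
      (by norm_num) (by norm_num) (by decide)
  · exact not_exists_isLargePrimitivePrimeDivisor_of_eq_prod (l := [3, 3, 7])
      (by norm_num) (by norm_num) (by decide)
  · exact not_exists_isLargePrimitivePrimeDivisor_of_eq_prod (l := [3, 11, 31])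
      (by norm_num) (by norm_num) (by decide)
  · exact not_exists_isLargePrimitivePrimeDivisor_of_eq_prod (l := [3, 3, 5, 7, 13])
      (by norm_num) (by norm_num) (by decide)
  · exact not_exists_isLargePrimitivePrimeDivisor_of_eq_prod (l := [3, 3, 3, 7, 19, 73])
      (by norm_num) (by norm_num) (by decide)
  · exact not_exists_isLargePrimitivePrimeDivisor_of_eq_prod (l := [2, 2, 2, 2, 5])
      (by norm_num) (by norm_num) (by decide)
  · exact not_exists_isLargePrimitivePrimeDivisor_of_eq_prod (l := [2, 2, 2, 7, 13])
      (by norm_num) (by norm_num) (by decide)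
  · exact not_exists_isLargePrimitivePrimeDivisor_of_eq_prod (l := [2, 2, 2, 3, 3, 7, 31])
      (by norm_num) (by norm_num) (by decide)

theorem exists_isLargePrimitivePrimeDivisor_of_mem
    (h : (x, n) ∈ ({(2, 3), (2, 5), (2, 8), (2, 16), (2, 30), (3, 10), (3, 12), (4, 6)} :
      Finset (ℕ × ℕ))) :
    ∃ r, IsLargePrimitivePrimeDivisor x n r := by
  suffices ∃ r, n + 1 < r ∧ IsPrimitivePrimeDivisor x n r from
    this.imp fun r ⟨hlt, hr⟩ ↦ ⟨hr, .inl hlt⟩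
  simp only [Finset.mem_insert, Finset.mem_singleton, Prod.mk.injEq] at h
  rcases h with ⟨rfl, rfl⟩ | ⟨rfl, rfl⟩ | ⟨rfl, rfl⟩ | ⟨rfl, rfl⟩ | ⟨rfl, rfl⟩ | ⟨rfl, rfl⟩ |
    ⟨rfl, rfl⟩ | ⟨rfl, rfl⟩
  · exact ⟨7, by norm_num, by norm_num, by norm_num, by decide⟩
  · exact ⟨31, by norm_num, by norm_num, by norm_num, by decide⟩
  · exact ⟨17, by norm_num, by norm_num, by norm_num, by decide⟩
  · exact ⟨257, by norm_num, by norm_num, by norm_num, by decide⟩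
  · exact ⟨331, by norm_num, by norm_num, by norm_num, by decide⟩
  · exact ⟨61, by norm_num, by norm_num, by norm_num, by decide⟩
  · exact ⟨73, by norm_num, by norm_num, by norm_num, by decide⟩
  · exact ⟨13, by norm_num, by norm_num, by norm_num, by decide⟩

theorem exists_isLargePrimitivePrimeDivisor_iff_notMem (hx : 2 ≤ x) (hn : 3 ≤ n) :
    (∃ r, IsLargePrimitivePrimeDivisor x n r) ↔ (x, n) ∉ exceptionalPairs := by
  refine ⟨fun h hmem ↦ not_exists_isLargePrimitivePrimeDivisor_of_mem hmem h, fun hmem ↦ ?_⟩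
  by_contra h
  have hcand := mem_of_not_exists_isLargePrimitivePrimeDivisor hx hn h
  exact h (exists_isLargePrimitivePrimeDivisor_of_mem
    ((Finset.mem_union.1 hcand).resolve_left hmem))

end SmallCases

section ExponentTwo

variable {x r : ℕ}

theorem isPrimitivePrimeDivisor_two_iff (hx : x ≠ 0) :
    IsPrimitivePrimeDivisor x 2 r ↔ r.Prime ∧ r ≠ 2 ∧ r ∣ x + 1 := by
  obtain ⟨y, rfl⟩ := Nat.exists_eq_succ_of_ne_zero hx
  have hfactor : (y + 1) ^ 2 - 1 = (y + 2) * y := by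
    simpa using Nat.sq_sub_sq (y + 1) 1
  have hone : (∀ i, 1 ≤ i → i < 2 → ¬ r ∣ (y + 1) ^ i - 1) ↔ ¬ r ∣ y := by
    refine ⟨fun h ↦ by simpa using h 1 le_rfl one_lt_two, fun h i hi hi₂ ↦ ?_⟩
    obtain rfl : i = 1 := by lia
    simpa using h
  rw [IsPrimitivePrimeDivisor, Nat.succ_eq_add_one, hone, hfactor]
  refine and_congr_right fun hr ↦ ⟨fun ⟨hdvd, hy⟩ ↦ ?_, fun ⟨hr₂, hdvd⟩ ↦ ?_⟩
  · have hdvd' : r ∣ y + 2 := (hr.dvd_mul.1 hdvd).resolve_right hy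
    refine ⟨?_, hdvd'⟩
    rintro rfl
    exact hy ((Nat.dvd_add_left dvd_rfl).1 hdvd')
  · refine ⟨hdvd.mul_right y, fun hy ↦ hr₂ ?_⟩
    exact (Nat.prime_dvd_prime_iff_eq hr Nat.prime_two).1 ((Nat.dvd_add_right hy).1 hdvd)

theorem isLargePrimitivePrimeDivisor_two_iff (hx : x ≠ 0) :
    IsLargePrimitivePrimeDivisor x 2 r ↔
      r.Prime ∧ r ≠ 2 ∧ r ∣ x + 1 ∧ (3 < r ∨ r ^ 2 ∣ x + 1) := by
  rw [IsLargePrimitivePrimeDivisor, isPrimitivePrimeDivisor_two_iff hx, and_assoc, and_assoc]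
  refine and_congr_right fun hr ↦ and_congr_right fun hr₂ ↦ and_congr_right fun hdvd ↦
    or_congr_right ?_
  have hnot : ¬ r ∣ x - 1 := by
    simpa using
      ((isPrimitivePrimeDivisor_two_iff hx).2 ⟨hr, hr₂, hdvd⟩).2.2 1 le_rfl one_lt_two
  have hcop : (r ^ 2).Coprime (x - 1) := (hr.coprime_iff_not_dvd.2 hnot).pow_left 2
  rw [← one_pow 2, Nat.sq_sub_sq, hcop.dvd_mul_right, one_pow]

theorem exists_odd_prime_dvd_iff_ne_two_pow_mul_three_pow {m : ℕ} (hm : m ≠ 0) :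
    (∃ r, r.Prime ∧ r ≠ 2 ∧ r ∣ m ∧ (3 < r ∨ r ^ 2 ∣ m)) ↔
      ¬ ∃ s t, t ≤ 1 ∧ m = 2 ^ s * 3 ^ t := by
  constructor
  · rintro ⟨r, hr, hr₂, hdvd, hlarge⟩ ⟨s, t, ht, rfl⟩
    have hcop : r.Coprime (2 ^ s) := ((Nat.coprime_primes hr Nat.prime_two).2 hr₂).pow_right s
    have hdvd₃ : r ∣ 3 := hr.dvd_of_dvd_pow (hcop.dvd_of_dvd_mul_left hdvd)
    obtain rfl : r = 3 := (Nat.prime_dvd_prime_iff_eq hr Nat.prime_three).1 hdvd₃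
    have hsq : 3 ^ 2 ∣ 3 ^ t :=
      (hcop.pow_left 2).dvd_of_dvd_mul_left (hlarge.resolve_left (lt_irrefl 3))
    exact absurd ((Nat.pow_dvd_pow_iff_le_right (by norm_num)).1 hsq) (by lia)
  · intro h
    by_contra! hnone
    obtain ⟨s, l, hl, rfl⟩ := Nat.exists_eq_pow_mul_and_not_dvd hm 2 (by norm_num)
    have hne_two {r : ℕ} (hrl : r ∣ l) : r ≠ 2 := by rintro rfl; exact hl hrl
    have hsquarefree : Squarefree l := by
      refine Nat.squarefree_iff_prime_squarefree.2 fun r hr hsq ↦ ?_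
      have hrl : r ∣ l := (dvd_mul_right r r).trans hsq
      refine (hnone r hr (hne_two hrl) (hrl.mul_left _)).2 ?_
      exact (sq r ▸ hsq).mul_left _
    have hl₃ : l ∣ 3 := by
      refine dvd_of_squarefree_of_forall_prime_dvd hsquarefree fun r hr hrl ↦ ?_
      have hr₃ := (hnone r hr (hne_two hrl) (hrl.mul_left _)).1
      rw [hr₃.antisymm (hr.two_le.lt_of_ne' (hne_two hrl))]
    rcases (Nat.dvd_prime Nat.prime_three).1 hl₃ with rfl | rfl
    · exact h ⟨s, 0, zero_le_one, by simp⟩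
    · exact h ⟨s, 1, le_rfl, by simp⟩

theorem exists_isLargePrimitivePrimeDivisor_two_iff (hx : 2 ≤ x) :
    (∃ r, IsLargePrimitivePrimeDivisor x 2 r) ↔
      ¬ ∃ s t, t ≤ 1 ∧ (t = 0 → 2 ≤ s) ∧ x = 2 ^ s * 3 ^ t - 1 := by
  simp only [isLargePrimitivePrimeDivisor_two_iff (show x ≠ 0 by lia)]
  rw [exists_odd_prime_dvd_iff_ne_two_pow_mul_three_pow x.succ_ne_zero, not_iff_not]
  refine exists₂_congr fun s t ↦ and_congr_right fun _ ↦ ⟨fun h ↦ ⟨?_, by lia⟩, fun h ↦ ?_⟩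
  · rintro rfl
    by_contra! hs
    have : 2 ^ s ≤ 2 ^ 1 := Nat.pow_le_pow_right two_pos (by lia)
    lia
  · have : 0 < 2 ^ s * 3 ^ t := by positivity
    lia

end ExponentTwo

/-- Feit's theorem on large primitive prime divisors: for integers `x, n > 1`,
`x^n - 1` has a large primitive prime divisor except exactly in the listed cases. -/
theorem exists_largePrimitivePrimeDivisor_iff (x n : ℕ) (hx : 2 ≤ x) (hn : 2 ≤ n) :
    (∃ r : ℕ, IsLargePrimitivePrimeDivisor x n r) ↔
      ¬ ((n = 2 ∧ ∃ s t : ℕ, t ≤ 1 ∧ (t = 0 → 2 ≤ s) ∧ x = 2 ^ s * 3 ^ t - 1) ∨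
         (x = 2 ∧ (n = 4 ∨ n = 6 ∨ n = 10 ∨ n = 12 ∨ n = 18)) ∨
         (x = 3 ∧ (n = 4 ∨ n = 6)) ∨
         (x = 5 ∧ n = 6)) := by
  rcases hn.eq_or_lt with rfl | hn₃
  · rw [exists_isLargePrimitivePrimeDivisor_two_iff hx]
    simp
  · rw [exists_isLargePrimitivePrimeDivisor_iff_notMem hx hn₃]
    simp only [exceptionalPairs, Finset.mem_insert, Finset.mem_singleton, Prod.mk.injEq]
    grind
end

section
/- For every finite group G, m(G) = m_pp(G); that is, the largest cardinality of an independent generating set of G equals the largest cardinality of a pp-independent generating set of G. -/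
/-- An element of a group is a `pp`-element if its order is a prime power. -/
def IsPPElement {G : Type*} [Group G] (g : G) : Prop := IsPrimePow (orderOf g)

/-- A subset `X` of a group `G` is independent if `⟨Y, Φ(G)⟩ ≠ ⟨X, Φ(G)⟩` for every
proper subset `Y` of `X`. -/
def IsIndependent (G : Type*) [Group G] (X : Set G) : Prop :=
  ∀ Y : Set G, Y ⊂ X → Subgroup.closure Y ⊔ frattini G ≠ Subgroup.closure X ⊔ frattini G

/-- `m(G)`: the largest cardinality of an independent generating set of `G`. -/
noncomputable def mIndep (G : Type*) [Group G] : ℕ :=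
  sSup {n | ∃ X : Set G, IsIndependent G X ∧ Subgroup.closure X = ⊤ ∧ X.ncard = n}

/-- `m_pp(G)`: the largest cardinality of a `pp`-independent generating set of `G`. -/
noncomputable def mPPIndep (G : Type*) [Group G] : ℕ :=
  sSup {n | ∃ X : Set G, IsIndependent G X ∧ (∀ x ∈ X, IsPPElement x) ∧
    Subgroup.closure X = ⊤ ∧ X.ncard = n}

/-!
Independent generating sets are exactly the inclusion-minimal generating sets, because elements of
the Frattini subgroup can be dropped from generating sets. Given a minimal generating set `X`, each
`x ∈ X` is a product of powers of `x` of prime-power order, so the `pp`-elements of the cyclic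
groups `⟨x⟩` generate `G`; let `Y` be a minimal generating set among them. Sending each `y ∈ Y` to
some `x ∈ X` with `y ∈ ⟨x⟩` has a generating image inside `X`, hence is onto `X` by minimality,
and therefore `|X| ≤ |Y|`.
-/

open Subgroup

section Generation

variable {G : Type*} [Group G]

theorem isCompactElement_zpowers (g : G) : IsCompactElement (zpowers g) := by
  rw [CompleteLattice.isCompactElement_iff_le_of_directed_sSup_le]
  intro K hne hdir hle
  simpa only [zpowers_le, mem_sSup_of_directedOn hne hdir] using hle

theorem closure_eq_iSup_zpowers (X : Set G) : closure X = ⨆ x ∈ X, zpowers x := by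
  simp only [zpowers_eq_closure, ← Subgroup.closure_iUnion, Set.biUnion_of_singleton]

theorem isCompactElement_of_subgroup_fg {H : Subgroup G} (hH : H.FG) : IsCompactElement H := by
  obtain ⟨X, rfl⟩ := hH
  simpa only [closure_eq_iSup_zpowers, Finset.mem_coe, Finset.sup_eq_iSup] using
    CompleteLattice.isCompactElement_finsetSup X fun x _ => isCompactElement_zpowers x

theorem isCompactElement_top_subgroup [Group.FG G] : IsCompactElement (⊤ : Subgroup G) :=
  isCompactElement_of_subgroup_fg Group.FG.out

theorem isCoatomic_subgroup [Group.FG G] : IsCoatomic (Subgroup G) :=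
  CompleteLattice.coatomic_of_top_compact isCompactElement_top_subgroup

theorem exists_finite_subset_closure_eq_top [Group.FG G] {X : Set G} (hX : closure X = ⊤) :
    ∃ Y ⊆ X, Y.Finite ∧ closure Y = ⊤ := by
  have hle : (⊤ : Subgroup G) ≤ ⨆ x : X, zpowers (x : G) := by
    rw [← hX, closure_eq_iSup_zpowers, iSup_subtype']
  obtain ⟨t, ht⟩ :=
    CompleteLattice.IsCompactElement.exists_finset_of_le_iSup _ isCompactElement_top_subgroup _ hle
  refine ⟨(↑) '' (t : Set X), Subtype.coe_image_subset X t, t.finite_toSet.image _, ?_⟩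
  rwa [closure_eq_iSup_zpowers, iSup_image, eq_top_iff]

end Generation

/-- A generating set of `G` none of whose proper subsets generates `G`. For finitely generated `G`
these are the independent generating sets, described without the Frattini subgroup. -/
def IsMinimalGenerating {G : Type*} [Group G] (X : Set G) : Prop :=
  Minimal (fun Y : Set G => closure Y = ⊤) X

section MinimalGenerating

variable {G : Type*} [Group G] {X Y : Set G}

theorem isMinimalGenerating_iff_isIndependent [IsCoatomic (Subgroup G)] :
    IsMinimalGenerating X ↔ IsIndependent G X ∧ closure X = ⊤ := by
  rw [IsMinimalGenerating, Set.minimal_iff_forall_ssubset, and_comm]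
  refine and_congr_left fun hX => forall₂_congr fun Y _ => not_congr ?_
  rw [hX, top_sup_eq]
  exact ⟨fun hY => by rw [hY, top_sup_eq], frattini_nongenerating⟩

theorem exists_isMinimalGenerating_subset [Group.FG G] (hX : closure X = ⊤) :
    ∃ Y ⊆ X, IsMinimalGenerating Y := by
  obtain ⟨Z, hZX, hZfin, hZ⟩ := exists_finite_subset_closure_eq_top hX
  obtain ⟨Y, hYZ, hY⟩ :=
    (hZfin.finite_subsets.subset fun W hW => hW.1 :
      {W | W ⊆ Z ∧ closure W = ⊤}.Finite).exists_le_minimal ⟨subset_rfl, hZ⟩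
  exact ⟨Y, hYZ.trans hZX, hY.prop.2, fun W hW hWY => hY.le_of_le ⟨hWY.trans hYZ, hW⟩ hWY⟩

theorem IsMinimalGenerating.finite [Group.FG G] (hX : IsMinimalGenerating X) : X.Finite := by
  obtain ⟨Y, hYX, hYfin, hY⟩ := exists_finite_subset_closure_eq_top hX.prop
  exact hYfin.subset (hX.le_of_le hY hYX)

theorem IsMinimalGenerating.ncard_le_of_forall_mem_zpowers (hX : IsMinimalGenerating X)
    (hYfin : Y.Finite) (hY : closure Y = ⊤) (h : ∀ y ∈ Y, ∃ x ∈ X, y ∈ zpowers x) :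
    X.ncard ≤ Y.ncard := by
  choose! f hfX hf using h
  have hgen : closure (f '' Y) = ⊤ := by
    rw [eq_top_iff, ← hY, closure_le]
    exact fun y hy => zpowers_le.mpr (subset_closure (Set.mem_image_of_mem f hy)) (hf y hy)
  have hXf : X ⊆ f '' Y := hX.le_of_le hgen (Set.image_subset_iff.mpr hfX)
  exact (Set.ncard_le_ncard hXf (hYfin.image f)).trans (Set.ncard_image_le hYfin)

end MinimalGenerating

section PPElement

variable {G : Type*} [Group G]

theorem mem_of_pow_mem_of_coprime {H : Subgroup G} {g : G} {a b : ℕ} (hab : a.Coprime b)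
    (ha : g ^ a ∈ H) (hb : g ^ b ∈ H) : g ∈ H := by
  have bezout : (g ^ a) ^ a.gcdA b * (g ^ b) ^ a.gcdB b = g := by
    rw [← zpow_natCast, ← zpow_natCast, ← zpow_mul, ← zpow_mul, ← zpow_add, ← Nat.gcd_eq_gcd_ab,
      hab.gcd_eq_one, Nat.cast_one, zpow_one]
  exact bezout ▸ mul_mem (zpow_mem ha _) (zpow_mem hb _)

theorem mem_of_forall_isPPElement_mem {H : Subgroup G} {g : G} (hg : IsOfFinOrder g)
    (hH : ∀ y ∈ zpowers g, IsPPElement y → y ∈ H) : g ∈ H := by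
  induction hn : orderOf g using Nat.recOnPosPrimePosCoprime generalizing g with
  | prime_pow p k hp hk =>
    exact hH g (mem_zpowers g) (hn ▸ hp.isPrimePow.pow hk.ne' : IsPrimePow (orderOf g))
  | zero => exact absurd hn hg.orderOf_pos.ne'
  | one => exact orderOf_eq_one_iff.mp hn ▸ one_mem H
  | coprime a b ha hb hab iha ihb =>
    have hpow (m : ℕ) : ∀ y ∈ zpowers (g ^ m), IsPPElement y → y ∈ H :=
      fun y hy => hH y (zpowers_le.mpr (npow_mem_zpowers g m) hy)
    refine mem_of_pow_mem_of_coprime hab (ihb hg.pow (hpow a) ?_) (iha hg.pow (hpow b) ?_)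
    · rw [orderOf_pow_of_dvd (by lia) (hn ▸ Nat.dvd_mul_right a b), hn,
        Nat.mul_div_cancel_left b (by lia)]
    · rw [orderOf_pow_of_dvd (by lia) (hn ▸ Nat.dvd_mul_left b a), hn,
        Nat.mul_div_cancel a (by lia)]

theorem closure_isPPElement_zpowers_eq_top {X : Set G} (htors : ∀ x ∈ X, IsOfFinOrder x)
    (hX : closure X = ⊤) : closure {y | IsPPElement y ∧ ∃ x ∈ X, y ∈ zpowers x} = ⊤ := by
  rw [eq_top_iff, ← hX, closure_le]
  exact fun x hx => mem_of_forall_isPPElement_mem (htors x hx)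
    fun y hyx hy => subset_closure ⟨hy, x, hx, hyx⟩

theorem IsMinimalGenerating.exists_isPPElement_ncard_le [Group.FG G] {X : Set G}
    (hX : IsMinimalGenerating X) (htors : ∀ x ∈ X, IsOfFinOrder x) :
    ∃ Y : Set G, IsMinimalGenerating Y ∧ (∀ y ∈ Y, IsPPElement y) ∧ X.ncard ≤ Y.ncard := by
  obtain ⟨Y, hYsub, hY⟩ :=
    exists_isMinimalGenerating_subset (closure_isPPElement_zpowers_eq_top htors hX.prop)
  exact ⟨Y, hY, fun y hy => (hYsub hy).1,
    hX.ncard_le_of_forall_mem_zpowers hY.finite hY.prop fun y hy => (hYsub hy).2⟩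

end PPElement

/-- If independent generating sets get arbitrarily large, so do the `pp`-independent ones, and both
sides are the junk value `0` of `sSup` on an unbounded set. -/
theorem mIndep_eq_mPPIndep_general (G : Type*) [Group G] [Group.FG G] (hG : IsMulTorsion G) :
    mIndep G = mPPIndep G := by
  have := isCoatomic_subgroup (G := G)
  refine csSup_eq_csSup_of_forall_exists_le ?_ ?_
  · rintro _ ⟨X, hXind, hXgen, rfl⟩
    obtain ⟨Y, hY, hYpp, hcard⟩ :=
      (isMinimalGenerating_iff_isIndependent.mpr ⟨hXind, hXgen⟩).exists_isPPElement_ncard_le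
        fun x _ => hG x
    obtain ⟨hYind, hYgen⟩ := isMinimalGenerating_iff_isIndependent.mp hY
    exact ⟨_, ⟨Y, hYind, hYpp, hYgen, rfl⟩, hcard⟩
  · rintro _ ⟨Y, hYind, -, hYgen, rfl⟩
    exact ⟨_, ⟨Y, hYind, hYgen, rfl⟩, le_rfl⟩

/-- For every finite group `G`, `m(G) = m_pp(G)`. -/
theorem mIndep_eq_mPPIndep (G : Type*) [Group G] [Finite G] :
    mIndep G = mPPIndep G :=
  mIndep_eq_mPPIndep_general G isMulTorsion_of_finite
end

section
/- If G is a finite B_pp-group and N is a normal subgroup of G, then the quotient group G/N is a B_pp-group. -/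
/-- A `pp`-base of `G` is an independent generating set all of whose elements are
`pp`-elements. -/
def IsPPBase (G : Type*) [Group G] (X : Set G) : Prop :=
  IsIndependent G X ∧ (∀ x ∈ X, IsPPElement x) ∧ Subgroup.closure X = ⊤

/-- A group is a `B_pp`-group if every two `pp`-bases have the same cardinality. -/
def IsBpp (G : Type*) [Group G] : Prop :=
  ∀ X Y : Set G, IsPPBase G X → IsPPBase G Y → X.ncard = Y.ncard

/-!
Let `f : G → K` be surjective with kernel `N`, where `G` is finitely generated and satisfies the
minimum condition on subgroups. Choose `H` minimal among the subgroups of `G` that map onto `K`,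
and then a minimal set `T` of `pp`-elements of `N` that generates `G` together with `H`; such a set
exists because `N` is torsion, hence generated by its `pp`-elements. A `pp`-base `X` of `K` lifts
bijectively to a set `S` of `pp`-elements of `H`. Since `⟨S⟩` maps onto `K`, minimality of `H`
forces `⟨S⟩ = H`, and so `S ∪ T` is a `pp`-base of `G` with `|X| + |T|` elements. Neither `H` nor
`T` depends on `X`, so `|X|` is determined by the common size of the `pp`-bases of `G`. Finite
generation makes all these sets finite, so counting them with `Set.ncard` loses nothing.
-/

open Subgroup

section PPElement

variable {G K : Type*} [Group G] [Group K]

theorem not_isPPElement_one : ¬ IsPPElement (1 : G) := by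
  simp only [IsPPElement, orderOf_one, not_isPrimePow_one, not_false_eq_true]

theorem mem_of_forall_mem_zpowers_isPPElement {g : G} (hg : IsOfFinOrder g) {L : Subgroup G}
    (hL : ∀ x ∈ zpowers g, IsPPElement x → x ∈ L) : g ∈ L := by
  induction hn : orderOf g using Nat.recOnPosPrimePosCoprime generalizing g with
  | zero => exact absurd hn hg.orderOf_pos.ne'
  | one => exact orderOf_eq_one_iff.mp hn ▸ L.one_mem
  | prime_pow p k hp hk =>
    exact hL g (mem_zpowers g) (hn ▸ hp.isPrimePow.pow hk.ne' : IsPrimePow (orderOf g))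
  | coprime a b ha hb hab iha ihb =>
    have hpow (k : ℕ) : ∀ x ∈ zpowers (g ^ k), IsPPElement x → x ∈ L :=
      fun x hx ↦ hL x (zpowers_le.2 (npow_mem_zpowers g k) hx)
    have hga : g ^ a ∈ L := ihb hg.pow (hpow a) <| by
      rw [orderOf_pow_of_dvd (by lia) (hn ▸ dvd_mul_right a b), hn,
        Nat.mul_div_cancel_left b (by lia)]
    have hgb : g ^ b ∈ L := iha hg.pow (hpow b) <| by
      rw [orderOf_pow_of_dvd (by lia) (hn ▸ dvd_mul_left b a), hn,
        Nat.mul_div_cancel a (by lia)]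
    obtain ⟨u, v, huv⟩ : IsCoprime (a : ℤ) b := Nat.isCoprime_iff_coprime.2 hab
    have hbezout : (g ^ a) ^ u * (g ^ b) ^ v = g := by
      rw [← zpow_natCast, ← zpow_natCast, ← zpow_mul, ← zpow_mul, ← zpow_add, mul_comm _ u,
        mul_comm _ v, huv, zpow_one]
    exact hbezout ▸ L.mul_mem (L.zpow_mem hga u) (L.zpow_mem hgb v)

theorem closure_setOf_mem_isPPElement {N : Subgroup G} (hN : ∀ g ∈ N, IsOfFinOrder g) :
    closure {g | g ∈ N ∧ IsPPElement g} = N := by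
  refine le_antisymm ((closure_le N).2 fun _ hg ↦ hg.1) fun g hg ↦ ?_
  exact mem_of_forall_mem_zpowers_isPPElement (hN g hg) fun x hx hpp ↦
    subset_closure ⟨zpowers_le.2 hg hx, hpp⟩

theorem exists_mem_zpowers_isPPElement_map_eq {f : G →* K} {h : G} (hh : IsOfFinOrder h)
    (hp : IsPPElement (f h)) : ∃ g ∈ zpowers h, IsPPElement g ∧ f g = f h := by
  obtain ⟨p, k, hpp, -, hk⟩ := (isPrimePow_nat_iff _).1 hp
  obtain ⟨a, m, hm, ho⟩ := Nat.exists_eq_pow_mul_and_not_dvd hh.orderOf_pos.ne' p hpp.ne_one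
  have hcop : (p ^ k).Coprime m := ((Nat.Prime.coprime_iff_not_dvd hpp).2 hm).pow_left k
  -- `r ≡ 1 [MOD p ^ k]` keeps the image fixed, `r ≡ 0 [MOD m]` leaves only `p`-torsion.
  obtain ⟨r, hr_one, hr_zero⟩ := Nat.chineseRemainder hcop 1 0
  have hmap : f (h ^ r) = f h := by
    rw [map_pow, ← pow_one (f h), ← pow_mul, one_mul, pow_eq_pow_iff_modEq, ← hk]
    exact hr_one
  have hpow : (h ^ r) ^ p ^ a = 1 := by
    rw [← pow_mul, ← orderOf_dvd_iff_pow_eq_one, ho, mul_comm]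
    exact mul_dvd_mul_right (Nat.modEq_zero_iff_dvd.1 hr_zero) _
  have hne : orderOf (h ^ r) ≠ 1 := fun h1 ↦ not_isPPElement_one <| by
    rwa [← hmap, orderOf_eq_one_iff.1 h1, map_one] at hp
  obtain ⟨j, -, hj⟩ := (Nat.dvd_prime_pow hpp).1 (orderOf_dvd_of_pow_eq_one hpow)
  refine ⟨h ^ r, npow_mem_zpowers h r, ?_, hmap⟩
  rw [IsPPElement, hj]
  exact hpp.isPrimePow.pow fun hj0 ↦ hne (by rw [hj, hj0, pow_zero])

end PPElement

section Generation

variable {G : Type*} [Group G]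

theorem isMulTorsion_of_wellFoundedLT_subgroup [WellFoundedLT (Subgroup G)] :
    IsMulTorsion G := by
  intro g
  obtain ⟨n, hn, hmin⟩ :=
    exists_minimalFor_of_wellFoundedLT (0 < ·) (fun n : ℕ ↦ zpowers (g ^ n)) ⟨1, one_pos⟩
  have hle : zpowers (g ^ n) ≤ zpowers (g ^ (n * 2)) :=
    hmin (Nat.mul_pos hn two_pos)
      (zpowers_le.2 (pow_mul g n 2 ▸ npow_mem_zpowers (g ^ n) 2))
  obtain ⟨k, hk⟩ := mem_zpowers_iff.1 (zpowers_le.1 hle)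
  refine isOfFinOrder_iff_zpow_eq_one.2 ⟨n * (2 * k - 1), ?_, ?_⟩
  · exact mul_ne_zero (by exact_mod_cast hn.ne') (by lia)
  · rw [mul_sub, mul_one, zpow_sub, mul_inv_eq_one, zpow_natCast, ← hk, ← zpow_natCast, ← zpow_mul]
    push_cast
    rw [mul_assoc]

theorem closure_eq_biSup_zpowers (S : Set G) : closure S = ⨆ g ∈ S, zpowers g := by
  simp only [zpowers_eq_closure, ← Subgroup.closure_iUnion, Set.biUnion_of_singleton]

theorem exists_finite_subset_sup_closure_eq_top [Group.FG G] {H : Subgroup G} {P : Set G}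
    (hP : H ⊔ closure P = ⊤) : ∃ T ⊆ P, T.Finite ∧ H ⊔ closure T = ⊤ := by
  have hgen : ⊤ ≤ ⨆ x : ↥((H : Set G) ∪ P), zpowers (x : G) := by
    rw [iSup_subtype, ← closure_eq_biSup_zpowers, Subgroup.closure_union, closure_eq, hP]
  obtain ⟨t, ht⟩ := CompleteLattice.IsCompactElement.exists_finset_of_le_iSup _
    isCompactElement_top_subgroup _ hgen
  refine ⟨P ∩ (↑) '' (t : Set ↥((H : Set G) ∪ P)), Set.inter_subset_left,
    (t.finite_toSet.image _).inter_of_right P, top_le_iff.1 (ht.trans (iSup₂_le fun x hx ↦ ?_))⟩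
  rw [zpowers_le]
  rcases x.2 with hxH | hxP
  · exact mem_sup_left hxH
  · exact mem_sup_right (subset_closure ⟨hxP, x, hx, rfl⟩)

theorem exists_finite_minimal_sup_closure_eq_top [Group.FG G] {H : Subgroup G} {P : Set G}
    (hP : H ⊔ closure P = ⊤) :
    ∃ T ⊆ P, T.Finite ∧ Minimal (fun T : Set G ↦ H ⊔ closure T = ⊤) T := by
  obtain ⟨T₀, hT₀P, hT₀fin, hT₀⟩ := exists_finite_subset_sup_closure_eq_top hP
  lift T₀ to Finset G using hT₀fin
  obtain ⟨T, hTT₀, hT⟩ := exists_minimal_le_of_wellFoundedLT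
    (fun T : Finset G ↦ H ⊔ closure (T : Set G) = ⊤) T₀ hT₀
  refine ⟨T, (Finset.coe_subset.2 hTT₀).trans hT₀P, T.finite_toSet, hT.prop, fun Y hY hYT ↦ ?_⟩
  lift Y to Finset G using T.finite_toSet.subset hYT
  exact Finset.coe_subset.2 (hT.le_of_le hY (Finset.coe_subset.1 hYT))

theorem finite_of_minimal_closure_eq_top [Group.FG G] {X : Set G}
    (hX : Minimal (fun Y : Set G ↦ closure Y = ⊤) X) : X.Finite := by
  obtain ⟨T, hTX, hTfin, hT⟩ :=
    exists_finite_minimal_sup_closure_eq_top (H := ⊥) (bot_sup_eq (closure X) ▸ hX.prop)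
  have hTgen : closure T = ⊤ := bot_sup_eq (closure T) ▸ hT.prop
  exact hX.eq_of_subset hTgen hTX ▸ hTfin

theorem IsPPBase.minimal {X : Set G} (hX : IsPPBase G X) :
    Minimal (fun Y : Set G ↦ closure Y = ⊤) X :=
  Set.minimal_iff_forall_ssubset.2
    ⟨hX.2.2, fun Y hYX hY ↦ hX.1 Y hYX (by rw [hY, hX.2.2])⟩

theorem isPPBase_of_minimal [IsCoatomic (Subgroup G)] {X : Set G}
    (hX : Minimal (fun Y : Set G ↦ closure Y = ⊤) X) (hpp : ∀ x ∈ X, IsPPElement x) :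
    IsPPBase G X := by
  refine ⟨fun Y hYX hY ↦ hX.not_prop_of_ssubset hYX (frattini_nongenerating ?_), hpp, hX.prop⟩
  rw [hY, hX.prop, top_sup_eq]

end Generation

section Lift

variable {G K : Type*} [Group G] [Group K] {f : G →* K} {H : Subgroup G}

theorem sup_ker_eq_top_of_map_eq_top (hH : H.map f = ⊤) : H ⊔ f.ker = ⊤ := by
  rw [← comap_map_eq, hH, comap_top]

theorem exists_bijOn_isPPElement_closure_eq
    (hH : Minimal (fun L : Subgroup G ↦ L.map f = ⊤) H) (hfin : ∀ h ∈ H, IsOfFinOrder h)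
    {X : Set K} (hX : closure X = ⊤) (hpp : ∀ x ∈ X, IsPPElement x) :
    ∃ S : Set G, Set.BijOn f S X ∧ (∀ s ∈ S, IsPPElement s) ∧ closure S = H := by
  have hsurj : Set.SurjOn f {g | g ∈ H ∧ IsPPElement g} X := by
    intro x hx
    obtain ⟨h, hh, rfl⟩ : x ∈ H.map f := hH.prop ▸ mem_top x
    obtain ⟨g, hg, hgpp, hgh⟩ :=
      exists_mem_zpowers_isPPElement_map_eq (hfin h hh) (hpp _ hx)
    exact ⟨g, ⟨zpowers_le.2 hh hg, hgpp⟩, hgh⟩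
  obtain ⟨S, hSH, hS⟩ := hsurj.exists_bijOn_subset
  refine ⟨S, hS, fun s hs ↦ (hSH hs).2, hH.eq_of_le ?_ ?_⟩
  · rw [MonoidHom.map_closure, hS.image_eq, hX]
  · exact (closure_le H).2 fun s hs ↦ (hSH hs).1

theorem minimal_union_closure_eq_top {S T : Set G} {X : Set K}
    (hX : Minimal (fun Y : Set K ↦ closure Y = ⊤) X) (hS : Set.BijOn f S X) (hTf : T ⊆ f.ker)
    (hT : Minimal (fun T : Set G ↦ closure S ⊔ closure T = ⊤) T) :
    Minimal (fun Y : Set G ↦ closure Y = ⊤) (S ∪ T) := by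
  have hST : closure (S ∪ T) = ⊤ := by rw [Subgroup.closure_union, hT.prop]
  refine ⟨hST, fun Y hY hYST ↦ ?_⟩
  have hsplit : closure (Y ∩ S) ⊔ closure (Y ∩ T) = ⊤ := by
    rw [← Subgroup.closure_union, ← Set.inter_union_distrib_left, Set.inter_eq_left.2 hYST, hY]
  have hker : (closure (Y ∩ T)).map f = ⊥ :=
    (Subgroup.map_eq_bot_iff _).2 ((closure_le _).2 (Set.inter_subset_right.trans hTf))
  have himage : closure (f '' (Y ∩ S)) = ⊤ := by
    have hmap : map f ⊤ = ⊤ := top_le_iff.1 <| by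
      rw [← hX.prop, ← hS.image_eq, ← MonoidHom.map_closure]
      exact map_mono le_top
    rw [← MonoidHom.map_closure, ← sup_bot_eq (map f _), ← hker, ← Subgroup.map_sup, hsplit, hmap]
  have hSY : S ⊆ Y := by
    intro s hs
    have hXsub : X ⊆ f '' (Y ∩ S) :=
      hX.le_of_le himage ((Set.image_mono Set.inter_subset_right).trans hS.image_eq.subset)
    obtain ⟨y, ⟨hyY, hyS⟩, hys⟩ := hXsub (hS.mapsTo hs)
    exact hS.injOn hyS hs hys ▸ hyY
  have hTY : T ⊆ Y ∩ T := by
    refine hT.le_of_le ?_ Set.inter_subset_right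
    rwa [Set.inter_eq_right.2 hSY] at hsplit
  exact Set.union_subset hSY (hTY.trans Set.inter_subset_left)

theorem exists_isPPBase_ncard_eq_add [Group.FG G]
    (hH : Minimal (fun L : Subgroup G ↦ L.map f = ⊤) H) (hfin : ∀ h ∈ H, IsOfFinOrder h)
    {T : Set G} (hTf : T ⊆ f.ker) (hTpp : ∀ t ∈ T, IsPPElement t)
    (hT : Minimal (fun T : Set G ↦ H ⊔ closure T = ⊤) T) {X : Set K} (hX : IsPPBase K X) :
    ∃ B : Set G, IsPPBase G B ∧ B.ncard = X.ncard + T.ncard := by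
  obtain ⟨S, hS, hSpp, rfl⟩ := exists_bijOn_isPPElement_closure_eq hH hfin hX.2.2 hX.2.1
  have hmin := minimal_union_closure_eq_top hX.minimal hS hTf hT
  obtain ⟨hSfin, hTfin⟩ := Set.finite_union.1 (finite_of_minimal_closure_eq_top hmin)
  have hdisj : Disjoint S T := Set.disjoint_left.2 fun s hs hsT ↦
    not_isPPElement_one (MonoidHom.mem_ker.1 (hTf hsT) ▸ hX.2.1 _ (hS.mapsTo hs))
  have : IsCoatomic (Subgroup G) :=
    CompleteLattice.coatomic_of_top_compact isCompactElement_top_subgroup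
  refine ⟨S ∪ T, isPPBase_of_minimal hmin (Set.union_subset hSpp hTpp), ?_⟩
  rw [Set.ncard_union_eq hdisj hSfin hTfin, ← hS.image_eq, hS.injOn.ncard_image]

end Lift

theorem isBpp_quotient_general {G K : Type*} [Group G] [Group K] [Group.FG G]
    [WellFoundedLT (Subgroup G)] {f : G →* K} (hf : Function.Surjective f) (hG : IsBpp G) :
    IsBpp K := by
  have hfin : ∀ g : G, IsOfFinOrder g := isMulTorsion_of_wellFoundedLT_subgroup
  obtain ⟨H, hH⟩ := exists_minimal_of_wellFoundedLT (fun L : Subgroup G ↦ L.map f = ⊤)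
    ⟨⊤, map_top_of_surjective f hf⟩
  have hgen : H ⊔ closure {g | g ∈ f.ker ∧ IsPPElement g} = ⊤ := by
    rw [closure_setOf_mem_isPPElement fun g _ ↦ hfin g, sup_ker_eq_top_of_map_eq_top hH.prop]
  obtain ⟨T, hTker, -, hT⟩ := exists_finite_minimal_sup_closure_eq_top hgen
  have hlift {X : Set K} (hX : IsPPBase K X) :
      ∃ B : Set G, IsPPBase G B ∧ B.ncard = X.ncard + T.ncard :=
    exists_isPPBase_ncard_eq_add hH (fun h _ ↦ hfin h) (fun t ht ↦ (hTker ht).1)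
      (fun t ht ↦ (hTker ht).2) hT hX
  intro X Y hX hY
  obtain ⟨B, hB, hBX⟩ := hlift hX
  obtain ⟨C, hC, hCY⟩ := hlift hY
  have hBC : B.ncard = C.ncard := hG B C hB hC
  lia

/-- Every quotient of a finite `B_pp`-group is a `B_pp`-group. -/
theorem isBpp_quotient (G : Type*) [Group G] [Finite G] (hG : IsBpp G)
    (N : Subgroup G) [N.Normal] : IsBpp (G ⧸ N) :=
  isBpp_quotient_general (QuotientGroup.mk'_surjective N) hG
end

section
/- A finite group G is a B_pp-group if and only if G/Φ(G) is a B_pp-group, where Φ(G) is the Frattini subgroup of G. -/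
/-! Let `f : G → H` be surjective with kernel inside `Φ(G)`. Then `Φ(G)` is the preimage of `Φ(H)`,
so `⟨f(X), Φ(H)⟩` pulls back to `⟨X, Φ(G)⟩`, and `f` preserves and reflects independence of any set
on which it is injective; an independent set is always such a set, because two elements of it that
agree modulo `Φ(G)` would make one of them redundant. Hence `f` maps `pp`-bases of `G` to `pp`-bases
of `H` of the same size. Conversely, a `pp`-element of `H` lifts to an element of finite order whose
`p`-part is again a lift, so a `pp`-base of `H` lifts elementwise to a set of `pp`-elements, which
generates `G` because `Φ(G)` consists of non-generators. -/

theorem exists_modEq_one_pow_pow_ordProj_eq_one {M : Type*} [Monoid M] {g : M}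
    (hg : IsOfFinOrder g) {p : ℕ} (hp : p.Prime) (k : ℕ) :
    ∃ e : ℕ, e ≡ 1 [MOD p ^ k] ∧ (g ^ e) ^ ordProj[p] (orderOf g) = 1 := by
  have hcop : (ordCompl[p] (orderOf g)).Coprime (p ^ k) :=
    (Nat.coprime_ordCompl hp hg.orderOf_pos.ne').symm.pow_right k
  obtain ⟨e, he₀, he₁⟩ := Nat.chineseRemainder hcop 0 1
  refine ⟨e, he₁, ?_⟩
  rw [← pow_mul, ← orderOf_dvd_iff_pow_eq_one, mul_comm]
  simpa only [Nat.ordProj_mul_ordCompl_eq_self] using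
    mul_dvd_mul_left (ordProj[p] (orderOf g)) (Nat.modEq_zero_iff_dvd.mp he₀)

theorem isOfFinOrder_of_isMulTorsion_ker {G M : Type*} [Group G] [Monoid M] {f : G →* M}
    (htors : IsMulTorsion f.ker) {g : G} (hg : IsOfFinOrder (f g)) : IsOfFinOrder g := by
  obtain ⟨n, hn, hpow⟩ := isOfFinOrder_iff_pow_eq_one.mp hg
  have hmem : g ^ n ∈ f.ker := by rw [MonoidHom.mem_ker, map_pow, hpow]
  have hgn : IsOfFinOrder (g ^ n) := f.ker.subtype.isOfFinOrder (htors ⟨g ^ n, hmem⟩)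
  exact hgn.of_pow hn.ne'

namespace IsPPElement

variable {G H : Type*} [Group G] [Group H] {f : G →* H}

theorem isOfFinOrder {g : G} (hg : IsPPElement g) : IsOfFinOrder g :=
  orderOf_ne_zero_iff.mp hg.ne_zero

theorem map {g : G} (hg : IsPPElement g) (hfg : f g ≠ 1) : IsPPElement (f g) :=
  IsPrimePow.dvd hg (orderOf_map_dvd f g) (mt orderOf_eq_one_iff.mp hfg)

theorem exists_pow_of_map {g : G} (hg : IsOfFinOrder g) (hfg : IsPPElement (f g)) :
    ∃ e : ℕ, f (g ^ e) = f g ∧ IsPPElement (g ^ e) := by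
  obtain ⟨p, k, hp, hk, horder⟩ := (isPrimePow_nat_iff _).mp hfg
  obtain ⟨e, he, hpow⟩ := exists_modEq_one_pow_pow_ordProj_eq_one hg hp k
  have hmap : f (g ^ e) = f g := by
    rw [horder] at he
    simpa only [map_pow, pow_one] using pow_eq_pow_iff_modEq.mpr he
  have hpdvd : p ∣ orderOf g := (dvd_pow_self p hk.ne').trans (horder ▸ orderOf_map_dvd f g)
  have hproj : IsPrimePow (ordProj[p] (orderOf g)) :=
    hp.isPrimePow.pow (hp.factorization_pos_of_dvd hg.orderOf_pos.ne' hpdvd).ne'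
  refine ⟨e, hmap, hproj.dvd (orderOf_dvd_of_pow_eq_one hpow) fun hone => hfg.ne_one ?_⟩
  rw [← hmap, orderOf_eq_one_iff.mp hone, map_one, orderOf_one]

theorem surjOn (hf : Function.Surjective f) (htors : IsMulTorsion f.ker) :
    Set.SurjOn f {g | IsPPElement g} {h | IsPPElement h} := by
  intro h hh
  obtain ⟨g, rfl⟩ := hf h
  obtain ⟨e, hmap, hpp⟩ :=
    exists_pow_of_map (isOfFinOrder_of_isMulTorsion_ker htors hh.isOfFinOrder) hh
  exact ⟨g ^ e, hpp, hmap⟩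

end IsPPElement

section Frattini

variable {G H : Type*} [Group G] [Group H] {f : G →* H}

theorem comap_frattini_of_ker_le (hf : Function.Surjective f) (hker : f.ker ≤ frattini G) :
    (frattini H).comap f = frattini G := by
  refine le_antisymm (le_iInf₂ fun M hM => ?_) (frattini_le_comap_frattini_of_surjective hf)
  have hcomap : (M.map f).comap f = M :=
    Subgroup.comap_map_eq_self (hker.trans (frattini_le_coatom hM))
  have hmap : IsCoatom (M.map f) :=
    ((Subgroup.gc_map_comap f).toGaloisInsertion fun K =>
      (Subgroup.map_comap_eq_self_of_surjective hf K).ge).isCoatom_of_image (hcomap.symm ▸ hM)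
  calc (frattini H).comap f ≤ (M.map f).comap f := Subgroup.comap_mono (frattini_le_coatom hmap)
    _ = M := hcomap

theorem comap_closure_image_sup_frattini (hf : Function.Surjective f)
    (hker : f.ker ≤ frattini G) (X : Set G) :
    (Subgroup.closure (f '' X) ⊔ frattini H).comap f = Subgroup.closure X ⊔ frattini G := by
  rw [← Subgroup.comap_sup_eq f _ _ hf, ← MonoidHom.map_closure, Subgroup.comap_map_eq,
    comap_frattini_of_ker_le hf hker, sup_assoc, sup_eq_right.mpr hker]

end Frattini

section PPBase

variable {G H : Type*} [Group G] [Group H] {f : G →* H} {X : Set G}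

theorem IsIndependent.notMem_closure_sdiff_singleton_sup_frattini (hX : IsIndependent G X) {x : G}
    (hx : x ∈ X) : x ∉ Subgroup.closure (X \ {x}) ⊔ frattini G := by
  intro hmem
  refine hX (X \ {x}) (Set.sdiff_singleton_ssubset.mpr hx) (le_antisymm ?_ ?_)
  · exact sup_le_sup_right (Subgroup.closure_mono Set.sdiff_subset) _
  · refine sup_le ((Subgroup.closure_le _).mpr fun y hy => ?_) le_sup_right
    obtain rfl | hne := eq_or_ne y x
    · exact hmem
    · exact Subgroup.mem_sup_left (Subgroup.subset_closure ⟨hy, hne⟩)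

theorem IsIndependent.injOn (hX : IsIndependent G X) (hker : f.ker ≤ frattini G) :
    Set.InjOn f X := by
  intro x hx y hy hxy
  by_contra hne
  have hy' : y ∈ Subgroup.closure (X \ {x}) := Subgroup.subset_closure ⟨hy, Ne.symm hne⟩
  have hdiv : y⁻¹ * x ∈ frattini G := hker (f.eq_iff.mp hxy)
  refine hX.notMem_closure_sdiff_singleton_sup_frattini hx ?_
  simpa only [mul_inv_cancel_left] using Subgroup.mul_mem_sup hy' hdiv

theorem isIndependent_image_iff (hf : Function.Surjective f) (hker : f.ker ≤ frattini G)
    (hinj : Set.InjOn f X) : IsIndependent H (f '' X) ↔ IsIndependent G X := by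
  have hiff (Y : Set G) :
      Subgroup.closure (f '' Y) ⊔ frattini H = Subgroup.closure (f '' X) ⊔ frattini H ↔
        Subgroup.closure Y ⊔ frattini G = Subgroup.closure X ⊔ frattini G := by
    rw [← (Subgroup.comap_injective hf).eq_iff, comap_closure_image_sup_frattini hf hker,
      comap_closure_image_sup_frattini hf hker]
  constructor
  · intro h Y hY
    exact mt (hiff Y).mpr (h _ ((hinj.image_ssubset_image_iff hY.subset subset_rfl).mpr hY))
  · intro h Z hZ
    obtain ⟨Y, hYX, rfl⟩ := Set.subset_image_iff.mp hZ.subset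
    exact mt (hiff Y).mp (h Y ((hinj.image_ssubset_image_iff hYX subset_rfl).mp hZ))

theorem IsPPBase.image (hX : IsPPBase G X) (hf : Function.Surjective f)
    (hker : f.ker ≤ frattini G) : IsPPBase H (f '' X) := by
  obtain ⟨hind, hpp, hgen⟩ := hX
  refine ⟨(isIndependent_image_iff hf hker (hind.injOn hker)).mpr hind, ?_, ?_⟩
  · rintro _ ⟨x, hx, rfl⟩
    refine (hpp x hx).map fun hfx => ?_
    exact hind.notMem_closure_sdiff_singleton_sup_frattini hx (Subgroup.mem_sup_right (hker hfx))
  · rw [← MonoidHom.map_closure, hgen, Subgroup.map_top_of_surjective f hf]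

theorem IsPPBase.of_image [IsCoatomic (Subgroup G)] (hX : IsPPBase H (f '' X))
    (hf : Function.Surjective f) (hker : f.ker ≤ frattini G) (hinj : Set.InjOn f X)
    (hpp : ∀ x ∈ X, IsPPElement x) : IsPPBase G X := by
  obtain ⟨hind, -, hgen⟩ := hX
  refine ⟨(isIndependent_image_iff hf hker hinj).mp hind, hpp, frattini_nongenerating ?_⟩
  rw [← comap_closure_image_sup_frattini hf hker, hgen, top_sup_eq, Subgroup.comap_top]

theorem IsPPBase.exists_bijOn [IsCoatomic (Subgroup G)] {Y : Set H} (hY : IsPPBase H Y)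
    (hf : Function.Surjective f) (hker : f.ker ≤ frattini G) (htors : IsMulTorsion f.ker) :
    ∃ X : Set G, IsPPBase G X ∧ Set.BijOn f X Y := by
  have hsurj : Set.SurjOn f {g | IsPPElement g} Y :=
    (IsPPElement.surjOn hf htors).mono subset_rfl hY.2.1
  obtain ⟨X, hpp, hbij⟩ := hsurj.exists_bijOn_subset
  exact ⟨X, .of_image (hbij.image_eq.symm ▸ hY) hf hker hbij.injOn hpp, hbij⟩

theorem IsBpp.of_forall_exists_ncard_eq (hH : IsBpp H)
    (h : ∀ X : Set G, IsPPBase G X → ∃ Y : Set H, IsPPBase H Y ∧ Y.ncard = X.ncard) :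
    IsBpp G := by
  intro X₁ X₂ hX₁ hX₂
  obtain ⟨Y₁, hY₁, hcard₁⟩ := h X₁ hX₁
  obtain ⟨Y₂, hY₂, hcard₂⟩ := h X₂ hX₂
  rw [← hcard₁, ← hcard₂, hH Y₁ Y₂ hY₁ hY₂]

end PPBase

theorem isBpp_iff_isBpp_quotient_frattini_general {G H : Type*} [Group G] [Group H]
    [IsCoatomic (Subgroup G)] (f : G →* H) (hf : Function.Surjective f)
    (hker : f.ker ≤ frattini G) (htors : IsMulTorsion f.ker) : IsBpp G ↔ IsBpp H := by
  constructor
  · intro hG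
    refine hG.of_forall_exists_ncard_eq fun Y hY => ?_
    obtain ⟨X, hX, hbij⟩ := hY.exists_bijOn hf hker htors
    exact ⟨X, hX, by rw [← hbij.image_eq, hbij.injOn.ncard_image]⟩
  · intro hH
    exact hH.of_forall_exists_ncard_eq fun X hX =>
      ⟨f '' X, hX.image hf hker, (hX.1.injOn hker).ncard_image⟩

/-- A finite group `G` is a `B_pp`-group if and only if `G/Φ(G)` is a `B_pp`-group. -/
theorem isBpp_iff_isBpp_quotient_frattini (G : Type*) [Group G] [Finite G] :
    IsBpp G ↔ IsBpp (G ⧸ frattini G) :=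
  isBpp_iff_isBpp_quotient_frattini_general (QuotientGroup.mk' (frattini G))
    (QuotientGroup.mk'_surjective _) (QuotientGroup.ker_mk' _).le isMulTorsion_of_finite
end

section
/- Let H be a finite almost simple group with socle S and suppose H ≠ S. If for every g ∈ H \ S there exists a pp-element s ∈ S with P(g, s) < 1, then for every subgroup K of H with H = KS there exists a pp-element x ∈ S such that H = ⟨K, x⟩ (that is, t(H) = 1). -/
open scoped Pointwise

/-- `P(g,s)`: the proportion of elements `t` of the conjugacy class of `s` in `H` such
that `⟨g, t⟩` does not contain `S`. -/
noncomputable def probNotGen {H : Type*} [Group H] (S : Subgroup H) (g s : H) : ℚ :=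
  ({t : H | IsConj s t ∧ ¬ S ≤ Subgroup.closure {g, t}}.ncard : ℚ) /
    ({t : H | IsConj s t}.ncard : ℚ)

/-!
Since `S ≠ ⊤` and `K ⊔ S = ⊤`, the subgroup `K` contains some `g ∉ S`. The bound `P(g, s) < 1` says
that some conjugate `x` of `s` satisfies `S ≤ ⟨g, x⟩`. This `x` is again a `pp`-element of `S`, and
`⟨K, x⟩` contains both `K` and `S`, hence is everything.
-/

section

variable {H : Type*} [Group H] {S K : Subgroup H} {g s t : H}

theorem IsPPElement.of_isConj (hs : IsPPElement s) (hst : IsConj s t) : IsPPElement t := by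
  obtain ⟨c, rfl⟩ := isConj_iff.mp hst
  have horder : orderOf (c * s * c⁻¹) = orderOf s := (MulAut.conj c).orderOf_eq s
  rwa [IsPPElement, horder]

theorem probNotGen_lt_one_iff (hfin : (conjugatesOf s).Finite) :
    probNotGen S g s < 1 ↔ ∃ t, IsConj s t ∧ S ≤ Subgroup.closure {g, t} := by
  let bad : Set H := {t ∈ conjugatesOf s | ¬ S ≤ Subgroup.closure {g, t}}
  have hsub : bad ⊆ conjugatesOf s := Set.sep_subset _ _
  have hpos : 0 < (conjugatesOf s).ncard := (Set.ncard_pos hfin).mpr ⟨s, mem_conjugatesOf_self⟩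
  calc probNotGen S g s < 1
      ↔ (bad.ncard : ℚ) / (conjugatesOf s).ncard < 1 := Iff.rfl
    _ ↔ bad.ncard < (conjugatesOf s).ncard := by rw [div_lt_one (mod_cast hpos), Nat.cast_lt]
    _ ↔ bad ≠ conjugatesOf s :=
        ⟨fun hlt heq => hlt.ne (congrArg Set.ncard heq),
          fun hne => Set.ncard_lt_ncard (hsub.ssubset_of_ne hne) hfin⟩
    _ ↔ ∃ t ∈ conjugatesOf s, S ≤ Subgroup.closure {g, t} := by
        rw [Ne, Set.sep_eq_self_iff_mem_true]
        push Not
        rfl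

theorem sup_closure_singleton_eq_top (hKS : K ⊔ S = ⊤) (hg : g ∈ K)
    (hS : S ≤ Subgroup.closure {g, t}) : K ⊔ Subgroup.closure {t} = ⊤ := by
  have hgt : Subgroup.closure {g, t} ≤ K ⊔ Subgroup.closure {t} := by
    rw [Set.insert_eq, Subgroup.closure_union]
    exact sup_le_sup_right ((Subgroup.closure_le K).mpr (Set.singleton_subset_iff.mpr hg)) _
  exact top_unique (hKS ▸ sup_le le_sup_left (hS.trans hgt))

end

theorem t_eq_one_of_prob_general (H : Type*) [Group H] (S : Subgroup H) [S.Normal] [Finite S]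
    (hne : S ≠ ⊤)
    (hyp : ∀ g : H, g ∉ S → ∃ s ∈ S, IsPPElement s ∧ probNotGen S g s < 1) :
    ∀ K : Subgroup H, (K : Set H) * (S : Set H) = Set.univ →
      ∃ x ∈ S, IsPPElement x ∧ K ⊔ Subgroup.closure {x} = ⊤ := by
  intro K hK
  have hKS : K ⊔ S = ⊤ := by rw [← Subgroup.coe_eq_univ, Subgroup.mul_normal, hK]
  obtain ⟨g, hgK, hgS⟩ : ∃ g ∈ K, g ∉ S :=
    SetLike.not_le_iff_exists.mp fun hle => hne (sup_eq_right.mpr hle ▸ hKS)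
  obtain ⟨s, hsS, hpp, hprob⟩ := hyp g hgS
  have hconj : conjugatesOf s ⊆ S := Group.conjugates_subset_normal hsS
  have hfin : (conjugatesOf s).Finite := (Set.toFinite (S : Set H)).subset hconj
  obtain ⟨x, hsx, hgen⟩ := (probNotGen_lt_one_iff hfin).mp hprob
  exact ⟨x, hconj hsx, hpp.of_isConj hsx, sup_closure_singleton_eq_top hKS hgK hgen⟩

/-- Let `H` be a finite almost simple group with socle `S` (a nonabelian simple normal
subgroup with trivial centralizer) and `H ≠ S`. If for every `g ∈ H \ S` there exists a
`pp`-element `s ∈ S` with `P(g,s) < 1`, then for every subgroup `K` of `H` with `H = KS`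
there exists a `pp`-element `x ∈ S` with `H = ⟨K, x⟩`, i.e. `t(H) = 1`. -/
theorem t_eq_one_of_prob (H : Type*) [Group H] [Finite H] (S : Subgroup H)
    [S.Normal] (hsimple : IsSimpleGroup S) (hnonab : ¬ ∀ a b : S, a * b = b * a)
    (hcent : Subgroup.centralizer (S : Set H) = ⊥)
    (hne : S ≠ ⊤)
    (hyp : ∀ g : H, g ∉ S → ∃ s ∈ S, IsPPElement s ∧ probNotGen S g s < 1) :
    ∀ K : Subgroup H, (K : Set H) * (S : Set H) = Set.univ →
      ∃ x ∈ S, IsPPElement x ∧ K ⊔ Subgroup.closure {x} = ⊤ :=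
  t_eq_one_of_prob_general H S hne hyp
end

section
/- Let H be a finite almost simple group with socle S and suppose H ≠ S. If for every g ∈ H \ S there exists a pp-element s ∈ S such that Σ_{M ∈ M(H,s)} μ(g, M\H) < 1 (the sum of the fixed point ratios of g on the coset spaces of the maximal subgroups of H containing s), then for every subgroup K of H with H = KS there exists a pp-element x ∈ S such that H = ⟨K, x⟩ (that is, t(H) = 1). -/
open scoped Pointwise

/-- The fixed point ratio `μ(g, M\H)` of `g ∈ H` acting by right multiplication on the
set of right cosets of `M` in `H`: the number of right cosets `C` with `Cg = C`,
divided by the total number of right cosets. -/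
noncomputable def rightCosetFPR (H : Type*) [Group H] (M : Subgroup H) (g : H) : ℚ :=
  ({C : Quotient (QuotientGroup.rightRel M) |
      ∀ w : H, Quotient.mk (QuotientGroup.rightRel M) w = C →
        Quotient.mk (QuotientGroup.rightRel M) (w * g) = C}.ncard : ℚ) /
    (Nat.card (Quotient (QuotientGroup.rightRel M)) : ℚ)

/-!
Averaging over conjugates: `μ(g, M\H)` is the proportion of `h ∈ H` with `h⁻¹gh ∈ M`. If the ratios,
summed over the maximal subgroups containing `s`, give less than `1`, then some `h⁻¹gh` lies in none
of them. Equivalently, no maximal subgroup contains both `g` and `hsh⁻¹`, so `hsh⁻¹` together with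
any subgroup containing `g` generates `H`.
-/

section Conjugation

variable {G : Type*} [Group G]

theorem IsPPElement.conj {s : G} (hs : IsPPElement s) (h : G) : IsPPElement (h * s * h⁻¹) := by
  rwa [IsPPElement, ← (SemiconjBy.conj_mk h s).orderOf_eq]

theorem sup_closure_conj_eq_top [IsCoatomic (Subgroup G)] {K : Subgroup G} {g s h : G}
    (hg : g ∈ K) (hgs : ∀ M : Subgroup G, IsCoatom M → s ∈ M → h⁻¹ * g * h ∉ M) :
    K ⊔ Subgroup.closure {h * s * h⁻¹} = ⊤ := by
  by_contra hK
  obtain ⟨M, hM, hKM⟩ := (eq_top_or_exists_le_coatom _).resolve_left hK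
  have hgM : g ∈ M := hKM (Subgroup.mem_sup_left hg)
  have hsM : h * s * h⁻¹ ∈ M :=
    hKM (Subgroup.mem_sup_right (Subgroup.mem_closure_singleton_self _))
  refine hgs (M.comap (MulAut.conj h : G →* G)) ((Subgroup.isCoatom_comap _).2 hM) ?_ ?_
  · simpa using hsM
  · simpa [mul_assoc] using hgM

end Conjugation

section FixedPointRatio

variable {H : Type*} [Group H]

theorem rightCosetFPR_eq_ncard_fixedBy_div_index (M : Subgroup H) (g : H) :
    rightCosetFPR H M g = (MulAction.fixedBy (H ⧸ M) g).ncard / M.index := by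
  let e := QuotientGroup.quotientRightRelEquivQuotientLeftRel M
  have hindex : Nat.card (Quotient (QuotientGroup.rightRel M)) = M.index := Nat.card_congr e
  rw [rightCosetFPR, hindex, ← Set.ncard_preimage_of_injective_subset_range e.injective (by simp)]
  have hfixed (w : H) : Quotient.mk (QuotientGroup.rightRel M) (w * g) = Quotient.mk _ w ↔
      e (Quotient.mk _ w) ∈ MulAction.fixedBy (H ⧸ M) g := by
    -- `e` sends `Mw` to `w⁻¹M`, so both sides say that `wg⁻¹w⁻¹ ∈ M`.
    change _ ↔ ((g * w⁻¹ : H) : H ⧸ M) = (w⁻¹ : H)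
    rw [Quotient.eq, QuotientGroup.rightRel_apply, QuotientGroup.eq, mul_inv_rev, mul_inv_rev,
      inv_inv, mul_assoc]
  congr 3
  ext C
  constructor
  · intro hC
    obtain ⟨w, rfl⟩ := Quotient.exists_rep C
    exact (hfixed w).1 (hC w rfl)
  · rintro hC w rfl
    exact (hfixed w).2 hC

theorem preimage_mk_fixedBy (M : Subgroup H) (g : H) :
    (QuotientGroup.mk ⁻¹' MulAction.fixedBy (H ⧸ M) g : Set H) = {h | h⁻¹ * g * h ∈ M} := by
  ext h
  rw [Set.mem_preimage, MulAction.mem_fixedBy, eq_comm, MulAction.Quotient.smul_coe, smul_eq_mul,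
    QuotientGroup.eq, ← mul_assoc, Set.mem_ofPred_eq]

theorem ncard_setOf_conj_mem (M : Subgroup H) (g : H) :
    {h : H | h⁻¹ * g * h ∈ M}.ncard = Nat.card M * (MulAction.fixedBy (H ⧸ M) g).ncard := by
  rw [← preimage_mk_fixedBy, ← Nat.card_coe_set_eq, ← Nat.card_coe_set_eq, ← Nat.card_prod,
    Nat.card_congr (QuotientGroup.preimageMkEquivSubgroupProdSet M _)]

theorem rightCosetFPR_eq_ncard_conj_mem_div_card [Finite H] (M : Subgroup H) (g : H) :
    rightCosetFPR H M g = {h : H | h⁻¹ * g * h ∈ M}.ncard / Nat.card H := by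
  have hM : (Nat.card M : ℚ) ≠ 0 := by exact_mod_cast Nat.card_pos.ne'
  rw [rightCosetFPR_eq_ncard_fixedBy_div_index, ncard_setOf_conj_mem, ← M.card_mul_index]
  push_cast
  rw [mul_div_mul_left _ _ hM]

theorem exists_forall_conj_notMem_of_sum_rightCosetFPR_lt_one [Finite H] {T : Finset (Subgroup H)}
    {g : H} (hT : ∑ M ∈ T, rightCosetFPR H M g < 1) :
    ∃ h : H, ∀ M ∈ T, h⁻¹ * g * h ∉ M := by
  have hcard : (0 : ℚ) < Nat.card H := by exact_mod_cast Nat.card_pos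
  simp only [rightCosetFPR_eq_ncard_conj_mem_div_card] at hT
  rw [← Finset.sum_div, div_lt_one hcard] at hT
  by_contra! hcover
  have huniv : ⋃ M ∈ T, {h : H | h⁻¹ * g * h ∈ M} = Set.univ := by
    simpa [Set.eq_univ_iff_forall] using hcover
  have hle : Nat.card H ≤ ∑ M ∈ T, {h : H | h⁻¹ * g * h ∈ M}.ncard := by
    rw [← Set.ncard_univ, ← huniv]
    exact Finset.set_ncard_biUnion_le T _
  exact hT.not_ge (by exact_mod_cast hle)

theorem exists_conj_sup_closure_eq_top_of_finsum_rightCosetFPR_lt_one [Finite H] {g s : H}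
    (hsum : ∑ᶠ M ∈ {M : Subgroup H | IsCoatom M ∧ s ∈ M}, rightCosetFPR H M g < 1) :
    ∃ h : H, ∀ K : Subgroup H, g ∈ K → K ⊔ Subgroup.closure {h * s * h⁻¹} = ⊤ := by
  rw [finsum_mem_eq_finite_toFinset_sum _ (Set.toFinite _)] at hsum
  obtain ⟨h, hh⟩ := exists_forall_conj_notMem_of_sum_rightCosetFPR_lt_one hsum
  exact ⟨h, fun K hg => sup_closure_conj_eq_top hg fun M hM hs => hh M (by simp [hM, hs])⟩

end FixedPointRatio

theorem t_eq_one_of_fpr_sum_general (H : Type*) [Group H] [Finite H] (S : Subgroup H)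
    [S.Normal] (hne : S ≠ ⊤)
    (hyp : ∀ g : H, g ∉ S → ∃ s ∈ S, IsPPElement s ∧
      ∑ᶠ M ∈ {M : Subgroup H | IsCoatom M ∧ s ∈ M}, rightCosetFPR H M g < 1) :
    ∀ K : Subgroup H, (K : Set H) * (S : Set H) = Set.univ →
      ∃ x ∈ S, IsPPElement x ∧ K ⊔ Subgroup.closure {x} = ⊤ := by
  intro K hK
  have hKS : K ⊔ S = ⊤ := by rw [← SetLike.coe_set_eq, Subgroup.mul_normal, hK, Subgroup.coe_top]
  obtain ⟨g, hgK, hgS⟩ : ∃ g ∈ K, g ∉ S :=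
    SetLike.not_le_iff_exists.1 fun hle => hne (by rw [← hKS, sup_eq_right.2 hle])
  obtain ⟨s, hsS, hs, hsum⟩ := hyp g hgS
  obtain ⟨h, hgen⟩ := exists_conj_sup_closure_eq_top_of_finsum_rightCosetFPR_lt_one hsum
  exact ⟨h * s * h⁻¹, ‹S.Normal›.conj_mem s hsS h, hs.conj h, hgen K hgK⟩

/-- Let `H` be a finite almost simple group with socle `S` (a nonabelian simple normal
subgroup with trivial centralizer) and `H ≠ S`. If for every `g ∈ H \ S` there exists a
`pp`-element `s ∈ S` such that the sum over the maximal subgroups `M` of `H` containing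
`s` of the fixed point ratios `μ(g, M\H)` is less than `1`, then for every subgroup `K`
of `H` with `H = KS` there is a `pp`-element `x ∈ S` with `H = ⟨K, x⟩`, i.e. `t(H) = 1`. -/
theorem t_eq_one_of_fpr_sum (H : Type*) [Group H] [Finite H] (S : Subgroup H)
    [S.Normal] (hsimple : IsSimpleGroup S) (hnonab : ¬ ∀ a b : S, a * b = b * a)
    (hcent : Subgroup.centralizer (S : Set H) = ⊥)
    (hne : S ≠ ⊤)
    (hyp : ∀ g : H, g ∉ S → ∃ s ∈ S, IsPPElement s ∧
      ∑ᶠ M ∈ {M : Subgroup H | IsCoatom M ∧ s ∈ M}, rightCosetFPR H M g < 1) :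
    ∀ K : Subgroup H, (K : Set H) * (S : Set H) = Set.univ →
      ∃ x ∈ S, IsPPElement x ∧ K ⊔ Subgroup.closure {x} = ⊤ :=
  t_eq_one_of_fpr_sum_general H S hne hyp
end

section
/- Let H be a finite almost simple group with socle S and let g, s ∈ H. Then P(g, s) ≤ Σ_{M ∈ M(H,s)} μ(g, M\H), where the sum runs over the maximal subgroups M of H containing s and μ(g, M\H) is the fixed point ratio of g acting on the right cosets of M in H. -/
/-!
Both `P(g, s)` and `μ(g, M\H)` are proportions of points in an orbit of `H`, so each is the
probability that a uniformly random `h ∈ H` moves the base point into a given set: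
`P(g, s)` is the probability that `⟨g, hsh⁻¹⟩` does not contain `S`, and `μ(g, M\H)` is the
probability that `h⁻¹gh ∈ M`. In the first event `⟨g, hsh⁻¹⟩` is proper, hence so is its conjugate
`⟨h⁻¹gh, s⟩`, which therefore lies in a maximal subgroup containing `s`. The union bound over
these maximal subgroups finishes the proof.
-/

theorem ncard_setOf_smul_mem {G X : Type*} [Group G] [MulAction G X] (x : X) (A : Set X) :
    {h : G | h • x ∈ A}.ncard =
      Nat.card (MulAction.stabilizer G x) * (A ∩ MulAction.orbit G x).ncard := by
  let orbitMap := MulAction.ofQuotientStabilizer G x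
  have range_orbitMap : Set.range orbitMap = MulAction.orbit G x :=
    (QuotientGroup.mk_surjective.range_comp orbitMap).symm
  have ncard_preimage : (orbitMap ⁻¹' A).ncard = (A ∩ MulAction.orbit G x).ncard := by
    rw [← Set.preimage_inter_range, range_orbitMap]
    exact Set.ncard_preimage_of_injective_subset_range
      (MulAction.injective_ofQuotientStabilizer G x)
      (range_orbitMap ▸ Set.inter_subset_right)
  calc {h : G | h • x ∈ A}.ncard
      = Nat.card (MulAction.stabilizer G x × (orbitMap ⁻¹' A : Set _)) :=
        Nat.card_congr (QuotientGroup.preimageMkEquivSubgroupProdSet _ (orbitMap ⁻¹' A))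
    _ = Nat.card (MulAction.stabilizer G x) * (A ∩ MulAction.orbit G x).ncard := by
        rw [Nat.card_prod, Nat.card_coe_set_eq, ncard_preimage]

theorem ncard_inter_orbit_div_ncard_orbit {G X : Type*} [Group G] [Finite G] [MulAction G X]
    (x : X) (A : Set X) :
    ((A ∩ MulAction.orbit G x).ncard : ℚ) / (MulAction.orbit G x).ncard =
      ({h : G | h • x ∈ A}.ncard : ℚ) / Nat.card G := by
  have card_eq : Nat.card G =
      Nat.card (MulAction.stabilizer G x) * (MulAction.orbit G x).ncard := by
    simpa only [Set.mem_univ, Set.ofPred_true, Set.ncard_univ, Set.univ_inter] using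
      ncard_setOf_smul_mem (G := G) x Set.univ
  have stabilizer_ne_zero : (Nat.card (MulAction.stabilizer G x) : ℚ) ≠ 0 :=
    Nat.cast_ne_zero.2 Nat.card_pos.ne'
  rw [ncard_setOf_smul_mem, card_eq, Nat.cast_mul, Nat.cast_mul,
    mul_div_mul_left _ _ stabilizer_ne_zero]

section

variable {H : Type*} [Group H]

theorem probNotGen_eq_ncard_div_card [Finite H] (S : Subgroup H) (g s : H) :
    probNotGen S g s =
      ({h : H | ¬ S ≤ Subgroup.closure {g, h * s * h⁻¹}}.ncard : ℚ) / Nat.card H := by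
  have : Finite (ConjAct H) := .of_equiv H ConjAct.toConjAct.toEquiv
  have orbit_eq : MulAction.orbit (ConjAct H) s = {t | IsConj s t} := by
    ext t
    rw [ConjAct.mem_orbit_conjAct, Set.mem_ofPred_eq, isConj_comm]
  have averaged := ncard_inter_orbit_div_ncard_orbit (G := ConjAct H) s
    {t | ¬ S ≤ Subgroup.closure {g, t}}
  rw [orbit_eq, Set.inter_comm] at averaged
  -- The action of `ConjAct H` unfolds to `h • s = h * s * h⁻¹`, so this holds definitionally.
  exact averaged

theorem rightCosetFPR_eq_ncard_fixedBy_div_card (M : Subgroup H) (g : H) :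
    rightCosetFPR H M g = ((MulAction.fixedBy (H ⧸ M) g).ncard : ℚ) / Nat.card (H ⧸ M) := by
  -- Inversion turns the right coset `Mw` into the left coset `w⁻¹M`.
  let e := QuotientGroup.quotientRightRelEquivQuotientLeftRel M
  have e_fixed (w : H) :
      e (Quotient.mk _ w) ∈ MulAction.fixedBy (H ⧸ M) g ↔
        Quotient.mk (QuotientGroup.rightRel M) (w * g) = Quotient.mk _ w := by
    rw [MulAction.mem_fixedBy, Quotient.eq, QuotientGroup.rightRel_apply]
    change ((g * w⁻¹ : H) : H ⧸ M) = (w⁻¹ : H) ↔ _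
    rw [QuotientGroup.eq]
    simp only [mul_inv_rev, inv_inv, mul_assoc]
  have fixed_eq : {C : Quotient (QuotientGroup.rightRel M) |
      ∀ w, Quotient.mk _ w = C → Quotient.mk _ (w * g) = C} =
        e ⁻¹' MulAction.fixedBy (H ⧸ M) g := by
    ext C
    constructor
    · obtain ⟨w, rfl⟩ := Quotient.exists_rep C
      exact fun hC => (e_fixed w).2 (hC w rfl)
    · rintro hC w rfl
      exact (e_fixed w).1 hC
  rw [rightCosetFPR, fixed_eq, Nat.card_congr e,
    Set.ncard_preimage_of_injective_subset_range e.injective (by simp)]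

theorem rightCosetFPR_eq_ncard_div_card [Finite H] (M : Subgroup H) (g : H) :
    rightCosetFPR H M g = ({h : H | h⁻¹ * g * h ∈ M}.ncard : ℚ) / Nat.card H := by
  have mk_mem_fixedBy (h : H) :
      h • ((1 : H) : H ⧸ M) ∈ MulAction.fixedBy (H ⧸ M) g ↔ h⁻¹ * g * h ∈ M := by
    rw [MulAction.mem_fixedBy, MulAction.Quotient.smul_coe, MulAction.Quotient.smul_coe, eq_comm,
      QuotientGroup.eq]
    simp only [smul_eq_mul, mul_one, mul_assoc]
  have averaged := ncard_inter_orbit_div_ncard_orbit (G := H) ((1 : H) : H ⧸ M)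
    (MulAction.fixedBy (H ⧸ M) g)
  simp only [MulAction.orbit_eq_univ, Set.inter_univ, Set.ncard_univ, mk_mem_fixedBy] at averaged
  rw [rightCosetFPR_eq_ncard_fixedBy_div_card, averaged]

theorem exists_isCoatom_of_closure_conj_ne_top [IsCoatomic (Subgroup H)] {g s h : H}
    (hne : Subgroup.closure {g, h * s * h⁻¹} ≠ ⊤) :
    ∃ M : Subgroup H, IsCoatom M ∧ s ∈ M ∧ h⁻¹ * g * h ∈ M := by
  obtain ⟨N, hN, hle⟩ := (eq_top_or_exists_le_coatom _).resolve_left hne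
  obtain ⟨hg, hs⟩ := Set.pair_subset_iff.1 ((Subgroup.closure_le N).1 hle)
  refine ⟨N.comap (MulAut.conj h).toMonoidHom,
    ((MulAut.conj h).comapSubgroup.isCoatom_iff N).2 hN, hs, ?_⟩
  simpa [mul_assoc] using hg

theorem probNotGen_le_sum_fpr_general [Finite H] (S : Subgroup H) (g s : H) :
    probNotGen S g s ≤ ∑ᶠ M ∈ {M : Subgroup H | IsCoatom M ∧ s ∈ M}, rightCosetFPR H M g := by
  have maximal_finite : {M : Subgroup H | IsCoatom M ∧ s ∈ M}.Finite := Set.toFinite _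
  have cover : {h : H | ¬ S ≤ Subgroup.closure {g, h * s * h⁻¹}} ⊆
      ⋃ M ∈ maximal_finite.toFinset, {h : H | h⁻¹ * g * h ∈ M} := by
    intro h hS
    obtain ⟨M, hM, hs, hg⟩ := exists_isCoatom_of_closure_conj_ne_top
      fun htop => hS (le_top.trans_eq htop.symm)
    exact Set.mem_biUnion (maximal_finite.mem_toFinset.2 ⟨hM, hs⟩) hg
  have union_bound := (Set.ncard_le_ncard cover).trans (Finset.set_ncard_biUnion_le _ _)
  rw [finsum_mem_eq_finite_toFinset_sum _ maximal_finite, probNotGen_eq_ncard_div_card]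
  simp only [rightCosetFPR_eq_ncard_div_card]
  rw [← Finset.sum_div]
  gcongr
  exact_mod_cast union_bound

end

/-- Let `H` be a finite almost simple group with socle `S` (a nonabelian simple normal
subgroup with trivial centralizer) and let `g, s ∈ H`. Then
`P(g,s) ≤ Σ_{M ∈ M(H,s)} μ(g, M\H)`, the sum running over the maximal subgroups of `H`
containing `s`. -/
theorem probNotGen_le_sum_fpr (H : Type*) [Group H] [Finite H] (S : Subgroup H)
    [S.Normal] (hsimple : IsSimpleGroup S) (hnonab : ¬ ∀ a b : S, a * b = b * a)
    (hcent : Subgroup.centralizer (S : Set H) = ⊥)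
    (g s : H) :
    probNotGen S g s ≤ ∑ᶠ M ∈ {M : Subgroup H | IsCoatom M ∧ s ∈ M}, rightCosetFPR H M g :=
  probNotGen_le_sum_fpr_general S g s
end
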